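/- arXiv:1009.0447 — 2 statements merged into one kernel-verified Lean document; each statement's English description precedes it below -/
import Mathlib

section
/- Let K be a number field, r a positive integer, and β ∈ O_K such that g = X^r − β is irreducible over K. Let η be a root of g and L = K(η). For every prime ideal P of O_K not dividing gcd(r, v_P(β)), the P-adic valuation of the relative discriminant D_{L|K} equals r·v_P(r) + r − gcd(r, v_P(β)). -/
open NumberField Polynomial UniqueFactorizationMonoid

/-- The `P`-adic valuation of an ideal of `𝓞 K`: the multiplicity of the prime `P` in the
factorisation of the ideal. -/
noncomputable def idealVal {K : Type*} [Field K] [NumberField K]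
    (P : Ideal (𝓞 K)) (I : Ideal (𝓞 K)) : ℕ :=
  letI := Classical.decEq (Ideal (𝓞 K))
  Multiset.count P (normalizedFactors I)

/-!
Write `v = v_P(β)`, `d = gcd(r, v)`, `r = d m`, and insert `F = K(η ^ m)` between `K` and `L`.
Scaling `η ^ m` by an element of `K` gives a generator `γ` of `F` for which `γ ^ d` is a unit at
`P`; as `P ∤ d`, the derivative of `X ^ d - γ ^ d` at `γ` shows that `F / K` is unramified over `P`.
Choose `s` with `s v ≡ d (mod r)`. As `s` is prime to `m`, a suitable multiple `ν` of `η ^ s`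
by an element of `K` generates `L / F`, and `ϖ = ν ^ m` lies in `F` with `v_P(ϖ ^ d) = d`. Hence
`ϖ` is a uniformizer at every prime of `F` over `P`, and `X ^ m - ϖ` is Eisenstein there, so the
conductor of `ν` is trivial over `P` and the different of `L / K` agrees over `P` with
`(m ν ^ (m - 1))`. Since `ν ^ r` lies in `K` and has valuation `d`, taking norms gives
`r v_P(m) + (m - 1) d = r v_P(r) + r - d`.
-/

section RelNorm

variable {R S : Type*} [CommRing R] [IsDedekindDomain R] [CommRing S] [IsDedekindDomain S]
  [Algebra R S] [Module.Finite R S] [Module.IsTorsionFree R S] {P : Ideal R}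

lemma emultiplicity_relNorm_eq_zero [P.IsPrime] (hP0 : P ≠ ⊥) {I : Ideal S}
    (hI : ∀ Q : Ideal S, Q.IsPrime → Q.LiesOver P → ¬ I ≤ Q) :
    emultiplicity P (Ideal.relNorm R I) = 0 := by
  obtain ⟨c, hcI, hcP⟩ : ∃ c, algebraMap R S c ∈ I ∧ c ∉ P := by
    by_contra! h
    obtain ⟨Q, hIQ, hQ, hQP⟩ := Ideal.exists_ideal_over_prime_of_isIntegral P I h
    exact hI Q hQ ⟨hQP.symm⟩ hIQ
  refine emultiplicity_eq_zero.mpr fun hdvd ↦ hcP ?_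
  have hnorm : Ideal.span {c} ^ Module.finrank R S ≤ Ideal.relNorm R I := by
    rw [← Ideal.relNorm_algebraMap, Ideal.map_span, Set.image_singleton]
    exact Ideal.relNorm_mono R ((Ideal.span_singleton_le_iff_mem I).mpr hcI)
  have hPc : P ∣ Ideal.span {c} :=
    (Ideal.prime_of_isPrime hP0 ‹_›).dvd_of_dvd_pow (hdvd.trans (Ideal.dvd_iff_le.mpr hnorm))
  exact Ideal.dvd_span_singleton.mp hPc

lemma emultiplicity_relNorm_span_algebraMap [P.IsPrime] (hP0 : P ≠ ⊥) (a : R) :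
    emultiplicity P (Ideal.relNorm R (Ideal.span {algebraMap R S a})) =
      Module.finrank R S * emultiplicity P (Ideal.span {a}) := by
  rw [← Set.image_singleton, ← Ideal.map_span, Ideal.relNorm_algebraMap,
    emultiplicity_pow (Ideal.prime_of_isPrime hP0 ‹_›)]

lemma emultiplicity_relNorm_span_of_pow_finrank_eq [P.IsPrime] (hP0 : P ≠ ⊥) {x : S} {a : R}
    (h : x ^ Module.finrank R S = algebraMap R S a) :
    emultiplicity P (Ideal.relNorm R (Ideal.span {x})) = emultiplicity P (Ideal.span {a}) := by
  refine (ENat.mul_right_strictMono (a := Module.finrank R S) (mod_cast Module.finrank_pos.ne')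
    (ENat.natCast_ne_top _)).injective ?_
  rw [← emultiplicity_relNorm_span_algebraMap hP0 a, ← h, ← Ideal.span_singleton_pow, map_pow,
    emultiplicity_pow (Ideal.prime_of_isPrime hP0 ‹_›)]

end RelNorm

section Tower

attribute [local instance] FractionRing.liftAlgebra

variable {R S T : Type*} (F L : Type*) [CommRing R] [IsDedekindDomain R] [CommRing S]
  [IsDedekindDomain S] [CommRing T] [IsDedekindDomain T] [Field F] [Field L]
  [Algebra R S] [Algebra S T] [Algebra R T] [IsScalarTower R S T]
  [Module.Finite R S] [Module.Finite S T] [Module.Finite R T]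
  [Module.IsTorsionFree R S] [Module.IsTorsionFree S T] [Module.IsTorsionFree R T]
  [Algebra.IsSeparable (FractionRing R) (FractionRing T)]
  [Algebra S F] [IsFractionRing S F] [Algebra T L] [Algebra F L] [Algebra S L]
  [IsScalarTower S F L] [IsScalarTower S T L] [IsIntegralClosure T S L]
  [FiniteDimensional F L] [Algebra.IsSeparable F L] {P : Ideal R} [P.IsPrime]

lemma emultiplicity_relNorm_differentIdeal_of_tower (hP0 : P ≠ ⊥)
    (hS : ∀ q : Ideal S, q.IsPrime → q.LiesOver P → ¬ differentIdeal R S ≤ q) {x : T}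
    (hx : Algebra.adjoin F {algebraMap T L x} = ⊤)
    (hcond : ∀ Q : Ideal T, Q.IsPrime → Q.LiesOver P → ¬ conductor S x ≤ Q) :
    emultiplicity P (Ideal.relNorm R (differentIdeal R T)) =
      emultiplicity P (Ideal.relNorm R (Ideal.span {aeval x (derivative (minpoly S x))})) := by
  have hP := Ideal.prime_of_isPrime hP0 ‹_›
  have hmap : ∀ Q : Ideal T, Q.IsPrime → Q.LiesOver P →
      ¬ (differentIdeal R S).map (algebraMap S T) ≤ Q := fun Q hQ hQP hle ↦
    hS (Q.under S) inferInstance inferInstance (Ideal.map_le_iff_le_comap.mp hle)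
  rw [← conductor_mul_differentIdeal S F L x hx,
    differentIdeal_eq_differentIdeal_mul_differentIdeal R S T]
  simp only [map_mul, emultiplicity_mul hP, emultiplicity_relNorm_eq_zero hP0 hmap,
    emultiplicity_relNorm_eq_zero hP0 hcond, add_zero, zero_add]

end Tower

lemma aeval_derivative_X_pow_sub_C {R S : Type*} [CommRing R] [CommRing S] [Algebra R S] (x : S)
    (n : ℕ) (a : R) : aeval x (derivative (X ^ n - C a)) = n * x ^ (n - 1) := by
  simp [derivative_X_pow]

section Unramified

attribute [local instance] FractionRing.liftAlgebra

variable {R S : Type*} [CommRing R] [IsDedekindDomain R] [CommRing S] [IsDedekindDomain S]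
  [Algebra R S] [Module.IsTorsionFree R S]

lemma aeval_derivative_mem_differentIdeal_of_aeval_eq_zero (K L : Type*) [Field K] [Field L]
    [Algebra R K] [IsFractionRing R K] [Algebra K L] [Algebra R L] [Algebra S L]
    [IsScalarTower R K L] [IsScalarTower R S L] [IsIntegralClosure S R L]
    [FiniteDimensional K L] [Algebra.IsSeparable K L] {x : S}
    (hx : Algebra.adjoin K {algebraMap S L x} = ⊤) {f : R[X]} (hf : aeval x f = 0) :
    aeval x (derivative f) ∈ differentIdeal R S := by
  have hxA : IsIntegral R x := IsIntegralClosure.isIntegral R L x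
  obtain ⟨g, rfl⟩ := minpoly.isIntegrallyClosed_dvd hxA hf
  simpa [derivative_mul] using
    Ideal.mul_mem_right (aeval x g) _ (aeval_derivative_mem_differentIdeal R K L x hx)

lemma not_differentIdeal_le_of_pow_eq (K L : Type*) [Field K] [Field L]
    [Algebra R K] [IsFractionRing R K] [Algebra K L] [Algebra R L] [Algebra S L]
    [IsScalarTower R K L] [IsScalarTower R S L] [IsIntegralClosure S R L]
    [FiniteDimensional K L] [Algebra.IsSeparable K L] {x : S}
    (hx : Algebra.adjoin K {algebraMap S L x} = ⊤) {n : ℕ} {u : R} (hxu : x ^ n = algebraMap R S u)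
    {P : Ideal R} (hn : (n : R) ∉ P) (hu : u ∉ P) (q : Ideal S) [q.IsPrime] [q.LiesOver P] :
    ¬ differentIdeal R S ≤ q := by
  intro hle
  have hmem : aeval x (derivative (X ^ n - C u)) ∈ q :=
    hle (aeval_derivative_mem_differentIdeal_of_aeval_eq_zero K L hx (by simp [hxu]))
  rw [aeval_derivative_X_pow_sub_C] at hmem
  obtain h | h := ‹q.IsPrime›.mem_or_mem hmem
  · exact hn ((Ideal.mem_of_liesOver q P _).mpr (by simpa using h))
  · refine hu ((Ideal.mem_of_liesOver q P _).mpr ?_)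
    have hn0 : n ≠ 0 := by
      rintro rfl
      simp at hn
    rw [← hxu, ← Nat.sub_add_cancel (Nat.pos_of_ne_zero hn0), pow_succ]
    exact q.mul_mem_right _ h

variable [Module.Finite R S] [Algebra.IsSeparable (FractionRing R) (FractionRing S)]

lemma ramificationIdx'_eq_one_of_not_differentIdeal_le {P : Ideal R} [P.IsPrime] (hP0 : P ≠ ⊥)
    {q : Ideal S} [q.IsPrime] [q.LiesOver P] (hq : ¬ differentIdeal R S ≤ q) :
    P.ramificationIdx' q = 1 := by
  have : P.IsMaximal := ‹P.IsPrime›.isMaximal hP0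
  have hdvd : q ^ (P.ramificationIdx' q - 1) ∣ differentIdeal R S :=
    pow_sub_one_dvd_differentIdeal R q _ hP0 (Ideal.dvd_iff_le.mpr Ideal.le_pow_ramificationIdx')
  have hle : P.ramificationIdx' q - 1 = 0 := by
    by_contra h
    exact hq (Ideal.dvd_iff_le.mp ((dvd_pow_self q h).trans hdvd))
  have hne := Ideal.IsDedekindDomain.ramificationIdx'_ne_zero_of_liesOver q hP0
  lia

lemma mem_and_notMem_sq_of_pow_eq {P : Ideal R} [P.IsPrime] (hP0 : P ≠ ⊥)
    {q : Ideal S} [q.IsPrime] [q.LiesOver P] (hq : ¬ differentIdeal R S ≤ q)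
    {y : S} {w : R} {n : ℕ} (hn : n ≠ 0) (hyw : y ^ n = algebraMap R S w)
    (hw : emultiplicity P (Ideal.span {w}) = n) :
    y ∈ q ∧ y ∉ q ^ 2 := by
  have hq0 : q ≠ ⊥ := Ideal.ne_bot_of_liesOver_of_ne_bot hP0 q
  have hqP := Ideal.prime_of_isPrime hq0 ‹_›
  have hw0 : Ideal.span {w} ≠ ⊥ := by
    intro h
    rw [h, ← Ideal.zero_eq_bot, emultiplicity_zero] at hw
    exact ENat.top_ne_natCast _ hw
  have hmul : n * emultiplicity q (Ideal.span {y}) = n * 1 := by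
    rw [← emultiplicity_pow hqP, Ideal.span_singleton_pow, hyw, ← Set.image_singleton,
      ← Ideal.map_span, Ideal.IsDedekindDomain.emultiplicity_map_eq_ramificationIdx'_mul hw0
        (Ideal.prime_of_isPrime hP0 ‹_›).irreducible hqP.irreducible hq0,
      ramificationIdx'_eq_one_of_not_differentIdeal_le hP0 hq, hw, Nat.cast_one, one_mul, mul_one]
  have hy : emultiplicity q (Ideal.span {y}) = (1 : ℕ) :=
    (ENat.mul_right_strictMono (mod_cast hn) (ENat.natCast_ne_top n)).injective hmul
  rwa [emultiplicity_eq_coe, pow_one, Ideal.dvd_span_singleton, Ideal.dvd_span_singleton] at hy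

end Unramified

section Eisenstein

lemma isEisensteinAt_X_pow_sub_C {S : Type*} [CommRing S] [Nontrivial S] {q : Ideal S}
    (hq : q ≠ ⊤) {b : S} (hb : b ∈ q) (hb2 : b ∉ q ^ 2) {m : ℕ} (hm : m ≠ 0) :
    (X ^ m - C b).IsEisensteinAt q := by
  refine (monic_X_pow_sub_C b hm).isEisensteinAt_of_mem_of_notMem hq (fun {n} hn ↦ ?_) ?_
  · rw [natDegree_X_pow_sub_C] at hn
    rcases eq_or_ne n 0 with rfl | hn0 <;> simp [coeff_X_pow, coeff_C, hn.ne, *]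
  · simpa [hm.symm] using hb2

lemma minpoly_eq_of_isEisensteinAt {S T : Type*} [CommRing S] [IsDomain S] [IsIntegrallyClosed S]
    [CommRing T] [IsDomain T] [Algebra S T] [Module.IsTorsionFree S T] {q : Ideal S} [q.IsPrime]
    {f : S[X]} (hf : f.Monic) (hei : f.IsEisensteinAt q) (hdeg : 0 < f.natDegree) {x : T}
    (hx : aeval x f = 0) : minpoly S x = f := by
  have hint : IsIntegral S x := ⟨f, hf, hx⟩
  have hirr : Irreducible f := hei.irreducible ‹_› hf.isPrimitive hdeg
  exact eq_of_monic_of_associated (minpoly.monic hint) hf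
    ((minpoly.irreducible hint).associated_of_dvd hirr (minpoly.isIntegrallyClosed_dvd hint hx))

lemma mem_adjoin_of_minpoly_isEisensteinAt_maximalIdeal {R K L : Type*} [CommRing R] [IsDomain R]
    [IsDiscreteValuationRing R] [Field K] [Field L] [Algebra R K] [IsFractionRing R K]
    [Algebra K L] [Algebra R L] [IsScalarTower R K L] {x z : L} (hx : IsIntegral R x)
    (hgen : Algebra.adjoin K {x} = ⊤)
    (hei : (minpoly R x).IsEisensteinAt (IsLocalRing.maximalIdeal R)) (hz : IsIntegral R z) :
    z ∈ Algebra.adjoin R {x} := by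
  obtain ⟨ϖ, hϖ⟩ := IsDiscreteValuationRing.exists_irreducible R
  obtain ⟨⟨a, ha⟩, hat⟩ : ∃ t : nonZeroDivisors R, t • z ∈ Algebra.adjoin R {x} :=
    multiple_mem_adjoin_of_mem_localization_adjoin _ K {x} z
      (hgen ▸ Algebra.mem_top)
  obtain ⟨n, u, rfl⟩ :=
    IsDiscreteValuationRing.eq_unit_mul_pow_irreducible (nonZeroDivisors.ne_zero ha) hϖ
  have hpow : ϖ ^ n • z ∈ Algebra.adjoin R {x} := by
    have := (Algebra.adjoin R {x}).smul_mem hat (↑u⁻¹ : R)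
    rwa [Submonoid.mk_smul, smul_smul, Units.inv_mul_cancel_left] at this
  let pb : PowerBasis K L := PowerBasis.ofAdjoinEqTop (hx.tower_top) hgen
  have hpb : pb.gen = x := PowerBasis.ofAdjoinEqTop_gen _ _
  rw [hϖ.maximalIdeal_eq] at hei
  rw [← hpb] at hx hpow hei ⊢
  exact mem_adjoin_of_smul_prime_pow_smul_of_minpoly_isEisensteinAt hϖ.prime hx hz hpow hei

lemma isEisensteinAt_map_maximalIdeal {S Sq : Type*} [CommRing S] [CommRing Sq] [IsLocalRing Sq]
    [Algebra S Sq] {q : Ideal S} [q.IsMaximal] [IsLocalization.AtPrime Sq q] {f : S[X]}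
    (hmonic : f.Monic) (hf : f.IsEisensteinAt q) :
    (f.map (algebraMap S Sq)).IsEisensteinAt (IsLocalRing.maximalIdeal Sq) := by
  refine (hmonic.map _).isEisensteinAt_of_mem_of_notMem Ideal.IsPrime.ne_top' (fun hn ↦ ?_) ?_
  · rw [hmonic.natDegree_map] at hn
    rw [coeff_map, ← IsLocalization.AtPrime.map_eq_maximalIdeal q Sq]
    exact Ideal.mem_map_of_mem _ (hf.mem hn)
  · rw [coeff_map, ← Ideal.mem_under, IsLocalization.AtPrime.under_maximalIdeal_pow q]
    exact hf.notMem

variable {S : Type*} [CommRing S] [IsDedekindDomain S] {q : Ideal S} [q.IsPrime]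

lemma exists_smul_mem_adjoin_of_minpoly_isEisensteinAt (F : Type*) {L : Type*} [Field F] [Field L]
    [Algebra S F] [IsFractionRing S F] [Algebra F L] [Algebra S L] [IsScalarTower S F L]
    (hq0 : q ≠ ⊥) {x z : L} (hx : IsIntegral S x) (hgen : Algebra.adjoin F {x} = ⊤)
    (hei : (minpoly S x).IsEisensteinAt q) (hz : IsIntegral S z) :
    ∃ t ∉ q, t • z ∈ Algebra.adjoin S {x} := by
  have := ‹q.IsPrime›.isMaximal hq0
  let Sq := Localization.subalgebra.ofField F q.primeCompl q.primeCompl_le_nonZeroDivisors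
  have : IsLocalization.AtPrime Sq q := Localization.subalgebra.isLocalization_ofField F _ _
  have : IsFractionRing Sq F := Localization.subalgebra.isFractionRing_ofField F _ _
  have : IsDiscreteValuationRing Sq :=
    IsLocalization.AtPrime.isDiscreteValuationRing_of_dedekind_domain S hq0 Sq
  have hmin : minpoly Sq x = (minpoly S x).map (algebraMap S Sq) := by
    apply Polynomial.map_injective _ (IsFractionRing.injective Sq F)
    rw [Polynomial.map_map, ← IsScalarTower.algebraMap_eq S Sq F]
    exact (minpoly.isIntegrallyClosed_eq_field_fractions' F hx.tower_top).symm.trans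
      (minpoly.isIntegrallyClosed_eq_field_fractions' F hx)
  have hei' : (minpoly Sq x).IsEisensteinAt (IsLocalRing.maximalIdeal Sq) :=
    hmin ▸ isEisensteinAt_map_maximalIdeal (minpoly.monic hx) hei
  obtain ⟨⟨t, ht⟩, hmem⟩ := multiple_mem_adjoin_of_mem_localization_adjoin
    q.primeCompl Sq {x} z
    (mem_adjoin_of_minpoly_isEisensteinAt_maximalIdeal hx.tower_top hgen hei' hz.tower_top)
  exact ⟨t, ht, hmem⟩

lemma not_conductor_le_of_minpoly_isEisensteinAt (F L : Type*) [Field F] [Field L]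
    [Algebra S F] [IsFractionRing S F] [Algebra F L] [Algebra S L] [IsScalarTower S F L]
    {T : Type*} [CommRing T] [Algebra S T] [Module.Finite S T] [Algebra T L] [FaithfulSMul T L]
    [IsScalarTower S T L] (hq0 : q ≠ ⊥) {x : T} (hgen : Algebra.adjoin F {algebraMap T L x} = ⊤)
    (hei : (minpoly S x).IsEisensteinAt q) (Q : Ideal T) [Q.LiesOver q] :
    ¬ conductor S x ≤ Q := by
  intro hle
  have hexists : ∀ z : T, ∃ t ∉ q, t • z ∈ Algebra.adjoin S {x} := by
    intro z
    have hinj := FaithfulSMul.algebraMap_injective T L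
    rw [← minpoly.algebraMap_eq hinj] at hei
    obtain ⟨t, ht, hmem⟩ := exists_smul_mem_adjoin_of_minpoly_isEisensteinAt F hq0
      (Algebra.IsIntegral.isIntegral x).algebraMap hgen hei
      (Algebra.IsIntegral.isIntegral z).algebraMap
    have hmap : Algebra.adjoin S {algebraMap T L x} =
        (Algebra.adjoin S {x}).map (IsScalarTower.toAlgHom S T L) := by
      rw [AlgHom.map_adjoin_singleton, IsScalarTower.coe_toAlgHom']
    obtain ⟨y, hy, hyz⟩ := hmap ▸ hmem
    exact ⟨t, ht, hinj (hyz.trans (map_smul (IsScalarTower.toAlgHom S T L) t z).symm) ▸ hy⟩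
  let N := Subalgebra.toSubmodule (Algebra.adjoin S {x})
  have hsupp : (⟨q, ‹_›⟩ : PrimeSpectrum S) ∉ Module.support S (T ⧸ N) := by
    rw [Module.notMem_support_iff']
    intro y
    obtain ⟨z, rfl⟩ := N.mkQ_surjective y
    obtain ⟨t, ht, hmem⟩ := hexists z
    exact ⟨t, ht, (Submodule.Quotient.mk_eq_zero N).mpr hmem⟩
  rw [Module.mem_support_iff_of_finite] at hsupp
  refine hsupp fun t ht ↦ (Ideal.mem_of_liesOver Q q t).mpr (hle fun z ↦ ?_)
  rw [← Algebra.smul_def]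
  exact (Submodule.Quotient.mk_eq_zero N).mp (Module.mem_annihilator.mp ht (N.mkQ z))

end Eisenstein

section RadicalTower

attribute [local instance] FractionRing.liftAlgebra

variable {R S T : Type*} (F L : Type*) [CommRing R] [IsDedekindDomain R] [CommRing S]
  [IsDedekindDomain S] [CommRing T] [IsDedekindDomain T] [Field F] [Field L]
  [Algebra R S] [Algebra S T] [Algebra R T] [IsScalarTower R S T]
  [Module.Finite R S] [Module.Finite S T] [Module.Finite R T]
  [Module.IsTorsionFree R S] [Module.IsTorsionFree S T] [Module.IsTorsionFree R T]
  [Algebra.IsSeparable (FractionRing R) (FractionRing T)]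
  [Algebra S F] [IsFractionRing S F] [Algebra T L] [Algebra F L] [Algebra S L]
  [IsScalarTower S F L] [IsScalarTower S T L] [IsIntegralClosure T S L]
  [FiniteDimensional F L] [Algebra.IsSeparable F L] {P : Ideal R} [P.IsPrime]

lemma emultiplicity_relNorm_differentIdeal_of_isEisensteinAt (hP0 : P ≠ ⊥)
    (hS : ∀ q : Ideal S, q.IsPrime → q.LiesOver P → ¬ differentIdeal R S ≤ q) {x : T}
    (hx : Algebra.adjoin F {algebraMap T L x} = ⊤) {f : S[X]} (hf : f.Monic)
    (hdeg : 0 < f.natDegree) (hfx : aeval x f = 0)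
    (hei : ∀ q : Ideal S, q.IsPrime → q.LiesOver P → f.IsEisensteinAt q) :
    emultiplicity P (Ideal.relNorm R (differentIdeal R T)) =
      emultiplicity P (Ideal.relNorm R (Ideal.span {aeval x (derivative f)})) := by
  have : FaithfulSMul T L :=
    (faithfulSMul_iff_algebraMap_injective T L).mpr (IsIntegralClosure.algebraMap_injective T S L)
  obtain ⟨⟨q₀, hq₀, hq₀P⟩⟩ := P.nonempty_primesOver (S := S)
  have hmin : minpoly S x = f := minpoly_eq_of_isEisensteinAt hf (hei q₀ hq₀ hq₀P) hdeg hfx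
  rw [emultiplicity_relNorm_differentIdeal_of_tower F L hP0 hS hx, hmin]
  intro Q hQ hQP
  have hq0 : Q.under S ≠ ⊥ := Ideal.ne_bot_of_liesOver_of_ne_bot hP0 _
  exact not_conductor_le_of_minpoly_isEisensteinAt F L hq0 hx
    (hmin ▸ hei (Q.under S) inferInstance inferInstance) Q

variable (K : Type*) [Field K] [Algebra R K] [IsFractionRing R K] [Algebra K F] [Algebra R F]
  [IsScalarTower R K F] [IsScalarTower R S F] [IsIntegralClosure S R F]
  [FiniteDimensional K F] [Algebra.IsSeparable K F]

theorem emultiplicity_relNorm_differentIdeal_of_radical_tower (hP0 : P ≠ ⊥) {d m : ℕ}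
    (hdP : (d : R) ∉ P) (hm : m ≠ 0) (hrank : Module.finrank R T = d * m)
    {u : R} (hu : u ∉ P) {γ : S} (hγ : Algebra.adjoin K {algebraMap S F γ} = ⊤)
    (hγu : γ ^ d = algebraMap R S u)
    {w : R} (hw : emultiplicity P (Ideal.span {w}) = d) {ϖ : S} (hϖw : ϖ ^ d = algebraMap R S w)
    {ν : T} (hν : Algebra.adjoin F {algebraMap T L ν} = ⊤) (hνϖ : ν ^ m = algebraMap S T ϖ) :
    emultiplicity P (Ideal.relNorm R (differentIdeal R T)) =
      (d * m : ℕ) * emultiplicity P (Ideal.span {(m : R)}) + ((m - 1) * d : ℕ) := by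
  have : Algebra.IsSeparable (FractionRing R) (FractionRing S) :=
    Algebra.isSeparable_tower_bot_of_isSeparable _ _ (FractionRing T)
  have hP := Ideal.prime_of_isPrime hP0 ‹_›
  have hd : d ≠ 0 := fun h ↦ hdP (by simp [h])
  have hS (q : Ideal S) (_ : q.IsPrime) (_ : q.LiesOver P) : ¬ differentIdeal R S ≤ q :=
    not_differentIdeal_le_of_pow_eq K F hγ hγu hdP hu q
  have hei (q : Ideal S) (_ : q.IsPrime) (_ : q.LiesOver P) : (X ^ m - C ϖ).IsEisensteinAt q :=
    have hϖ := mem_and_notMem_sq_of_pow_eq hP0 (hS q ‹_› ‹_›) hd hϖw hw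
    isEisensteinAt_X_pow_sub_C Ideal.IsPrime.ne_top' hϖ.1 hϖ.2 hm
  have hνw : ν ^ Module.finrank R T = algebraMap R T w := by
    rw [hrank, mul_comm, pow_mul, hνϖ, ← map_pow, hϖw, ← IsScalarTower.algebraMap_apply]
  rw [emultiplicity_relNorm_differentIdeal_of_isEisensteinAt F L hP0 hS hν
      (monic_X_pow_sub_C ϖ hm) (by simpa using Nat.pos_of_ne_zero hm) (by simp [hνϖ]) hei,
    aeval_derivative_X_pow_sub_C, ← map_natCast (algebraMap R T),
    ← Ideal.span_singleton_mul_span_singleton, ← Ideal.span_singleton_pow, map_mul, map_pow,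
    emultiplicity_mul hP, emultiplicity_pow hP, emultiplicity_relNorm_span_algebraMap hP0,
    emultiplicity_relNorm_span_of_pow_finrank_eq hP0 hνw, hw, hrank, Nat.cast_mul (m - 1)]

end RadicalTower

section Scaling

variable {R : Type*} [CommRing R] [IsDedekindDomain R] {P : Ideal R}

lemma emultiplicity_span_mul (hP : Prime P) (a b : R) :
    emultiplicity P (Ideal.span {a * b}) =
      emultiplicity P (Ideal.span {a}) + emultiplicity P (Ideal.span {b}) := by
  rw [← Ideal.span_singleton_mul_span_singleton, emultiplicity_mul hP]

lemma emultiplicity_span_pow (hP : Prime P) (a : R) (n : ℕ) :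
    emultiplicity P (Ideal.span {a ^ n}) = n * emultiplicity P (Ideal.span {a}) := by
  rw [← Ideal.span_singleton_pow, emultiplicity_pow hP]

lemma emultiplicity_span_eq_zero_iff {a : R} :
    emultiplicity P (Ideal.span {a}) = 0 ↔ a ∉ P := by
  rw [emultiplicity_eq_zero, Ideal.dvd_span_singleton]

lemma exists_emultiplicity_span_eq_one (hP : Prime P) :
    ∃ π : R, emultiplicity P (Ideal.span {π}) = 1 := by
  have := Ideal.isPrime_of_prime hP
  obtain ⟨π, hπ, hπ2⟩ := SetLike.exists_of_lt (Ideal.pow_succ_lt_pow hP.ne_zero 1)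
  rw [← Ideal.dvd_span_singleton] at hπ hπ2
  exact ⟨π, emultiplicity_eq_coe.mpr ⟨hπ, hπ2⟩⟩

lemma exists_notMem_dvd_mul (hP : Prime P) {a b : R} (hb : b ≠ 0)
    (hab : emultiplicity P (Ideal.span {b}) ≤ emultiplicity P (Ideal.span {a})) :
    ∃ c ∉ P, b ∣ c * a := by
  have hfin : FiniteMultiplicity P (Ideal.span {b}) := .of_prime_left hP (by simpa using hb)
  obtain ⟨J, hJ, hPJ⟩ := hfin.exists_eq_pow_mul_and_not_dvd
  obtain ⟨c, hcJ, hcP⟩ := SetLike.not_le_iff_exists.mp (mt Ideal.dvd_iff_le.mpr hPJ)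
  refine ⟨c, hcP, Ideal.mem_span_singleton.mp ?_⟩
  rw [hJ, mul_comm c]
  refine Ideal.mul_mem_mul (Ideal.dvd_span_singleton.mp ?_) hcJ
  exact pow_dvd_of_le_emultiplicity (hfin.emultiplicity_eq_multiplicity ▸ hab)

lemma exists_pow_mul_eq_pow_mul (hP : Prime P) {a : R} {v k n : ℕ} (hn : n ≠ 0)
    (ha : emultiplicity P (Ideal.span {a}) = v) (hvk : v ≡ k [MOD n]) :
    ∃ x y u : R, x ≠ 0 ∧ y ≠ 0 ∧ x ^ n * a = y ^ n * u ∧ emultiplicity P (Ideal.span {u}) = k := by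
  obtain ⟨π, hπ⟩ := exists_emultiplicity_span_eq_one hP
  have hπ0 : π ≠ 0 := by
    rintro rfl
    simp at hπ
  obtain ⟨i, j, hij⟩ : ∃ i j, v + n * i = n * j + k := by
    obtain hle | hle := le_total v k
    · obtain ⟨t, ht⟩ := (Nat.modEq_iff_exists_eq_add hle).mp hvk
      exact ⟨t, 0, by lia⟩
    · obtain ⟨t, ht⟩ := (Nat.modEq_iff_exists_eq_add hle).mp hvk.symm
      exact ⟨0, t, by lia⟩
  have hnum : emultiplicity P (Ideal.span {a * π ^ (n * i)}) = (n * j + k : ℕ) := by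
    rw [emultiplicity_span_mul hP, emultiplicity_span_pow hP, ha, hπ, mul_one, ← hij, Nat.cast_add]
  have hden : emultiplicity P (Ideal.span {π ^ (n * j)}) = (n * j : ℕ) := by
    rw [emultiplicity_span_pow hP, hπ, mul_one]
  obtain ⟨c, hcP, u, hu⟩ := exists_notMem_dvd_mul hP (pow_ne_zero (n * j) hπ0)
    (a := a * π ^ (n * i)) (by rw [hnum, hden]; exact_mod_cast Nat.le_add_right _ _)
  have hc : emultiplicity P (Ideal.span {c}) = 0 := emultiplicity_span_eq_zero_iff.mpr hcP
  have huk : emultiplicity P (Ideal.span {u}) = k := by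
    have h := congrArg (fun y ↦ emultiplicity P (Ideal.span {y})) hu
    simp only [emultiplicity_span_mul hP c, emultiplicity_span_mul hP (π ^ (n * j)), hnum, hden, hc,
      zero_add, Nat.cast_add] at h
    exact (ENat.add_right_injective_of_ne_top (ENat.natCast_ne_top (n * j)) h).symm
  have hc0 : c ≠ 0 := fun h ↦ hcP (h ▸ P.zero_mem)
  have hcn : c ^ n = c ^ (n - 1) * c := by rw [← pow_succ, Nat.sub_one_add_one hn]
  refine ⟨c * π ^ i, π ^ j, c ^ (n - 1) * u, by simp [hc0, hπ0], by simp [hπ0], ?_, ?_⟩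
  · rw [mul_pow, hcn]
    linear_combination c ^ (n - 1) * hu
  · rw [emultiplicity_span_mul hP, emultiplicity_span_pow hP, hc, huk, mul_zero, zero_add]

lemma exists_pow_mul_eq_algebraMap (hP : Prime P) (K : Type*) [Field K] [Algebra R K]
    [IsFractionRing R K] {a : R} {v k n : ℕ} (hn : n ≠ 0)
    (ha : emultiplicity P (Ideal.span {a}) = v) (hvk : v ≡ k [MOD n]) :
    ∃ (x : K) (u : R), x ≠ 0 ∧ x ^ n * algebraMap R K a = algebraMap R K u ∧
      emultiplicity P (Ideal.span {u}) = k := by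
  obtain ⟨x, y, u, hx, hy, hxy, hu⟩ := exists_pow_mul_eq_pow_mul hP hn ha hvk
  refine ⟨algebraMap R K x / algebraMap R K y, u, by simp [hx, hy], ?_, hu⟩
  rw [div_pow, div_mul_eq_mul_div, div_eq_iff (by simp [hy])]
  rw [← map_pow, ← map_mul, hxy, map_mul, map_pow, mul_comm]

end Scaling

section FieldTower

attribute [local instance] FractionRing.liftAlgebra

lemma isSeparable_fractionRing (R S K L : Type*) [CommRing R] [IsDomain R] [CommRing S]
    [IsDomain S] [Algebra R S] [Module.IsTorsionFree R S] [Field K] [Field L]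
    [Algebra R K] [IsFractionRing R K] [Algebra S L] [IsFractionRing S L] [Algebra K L]
    [Algebra R L] [IsScalarTower R K L] [IsScalarTower R S L] [Algebra.IsSeparable K L] :
    Algebra.IsSeparable (FractionRing R) (FractionRing S) := by
  refine .of_equiv_equiv (FractionRing.algEquiv R K).symm.toRingEquiv
    (FractionRing.algEquiv S L).symm.toRingEquiv ?_
  ext
  exact IsFractionRing.algEquiv_commutes (FractionRing.algEquiv R K).symm
    (FractionRing.algEquiv S L).symm _

variable {R K F L : Type*} (T : Type*) [CommRing R] [IsDedekindDomain R] [CommRing T]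
  [IsDedekindDomain T] [Field K] [Field F] [Field L] [Algebra R T] [Module.Finite R T]
  [Module.IsTorsionFree R T] [Algebra R K] [IsFractionRing R K] [Algebra K F] [Algebra F L]
  [Algebra K L] [Algebra R F] [Algebra R L] [Algebra T L] [IsScalarTower K F L]
  [IsScalarTower R K F] [IsScalarTower R F L] [IsScalarTower R T L]
  [IsIntegralClosure T R L] [FiniteDimensional K L] [Algebra.IsSeparable K L]
  {P : Ideal R} [P.IsPrime]

open IntermediateField in
theorem emultiplicity_relNorm_differentIdeal_of_radical_fieldTower (hP0 : P ≠ ⊥) {d m : ℕ}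
    (hdP : (d : R) ∉ P) (hm : m ≠ 0) (hrank : Module.finrank K L = d * m)
    {u : R} (hu : u ∉ P) {γ : F} (hγ : K⟮γ⟯ = ⊤) (hγu : γ ^ d = algebraMap R F u)
    {w : R} (hw : emultiplicity P (Ideal.span {w}) = d) {ϖ : F} (hϖw : ϖ ^ d = algebraMap R F w)
    {ν : L} (hν : F⟮ν⟯ = ⊤) (hνϖ : ν ^ m = algebraMap F L ϖ) :
    emultiplicity P (Ideal.relNorm R (differentIdeal R T)) =
      (d * m : ℕ) * emultiplicity P (Ideal.span {(m : R)}) + ((m - 1) * d : ℕ) := by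
  have : FiniteDimensional K F := .left K F L
  have : FiniteDimensional F L := .right K F L
  have : Algebra.IsSeparable K F := Algebra.isSeparable_tower_bot_of_isSeparable K F L
  have : Algebra.IsSeparable F L := Algebra.isSeparable_tower_top_of_isSeparable K F L
  have : IsScalarTower R K L := .to₁₂₄ R K F L
  have : IsFractionRing T L := IsIntegralClosure.isFractionRing_of_finite_extension R K L T
  have := isSeparable_fractionRing R T K L
  let S := integralClosure R F
  have : IsDedekindDomain S := integralClosure.isDedekindDomain R K F
  have : IsFractionRing S F := integralClosure.isFractionRing_of_finite_extension K F
  have : Module.Finite R S := IsIntegralClosure.finite R K F S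
  let φ : S →ₐ[R] T := IsIntegralClosure.lift R T L
  let _ : Algebra S T := φ.toRingHom.toAlgebra
  have : IsScalarTower R S T := .of_algHom φ
  have : IsScalarTower S T L :=
    .of_algebraMap_eq fun x ↦ (IsIntegralClosure.algebraMap_lift R T L x).symm
  have : IsIntegralClosure T S L := IsIntegralClosure.tower_top (R := R)
  have : Module.Finite S T := IsIntegralClosure.finite S F L T
  have : Module.IsTorsionFree S T :=
    have : Module.IsTorsionFree S L := .trans_faithfulSMul S F L
    IsIntegralClosure.isTorsionFree S L
  have : Module.IsTorsionFree R S :=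
    have : Module.IsTorsionFree R F := .trans_faithfulSMul R K F
    IsIntegralClosure.isTorsionFree R F
  have hd : 0 < d := Nat.pos_of_ne_zero fun h ↦ hdP (by simp [h])
  have hγR : IsIntegral R γ := .of_pow hd (hγu ▸ isIntegral_algebraMap)
  have hϖR : IsIntegral R ϖ := .of_pow hd (hϖw ▸ isIntegral_algebraMap)
  have hνR : IsIntegral R ν := .of_pow (Nat.pos_of_ne_zero hm) (hνϖ ▸ hϖR.algebraMap)
  have hν' := IsIntegralClosure.algebraMap_mk' T ν hνR
  refine emultiplicity_relNorm_differentIdeal_of_radical_tower F L K hP0 hdP hm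
    ?_ hu (γ := (⟨γ, hγR⟩ : S)) ?_ (Subtype.ext hγu) hw (ϖ := (⟨ϖ, hϖR⟩ : S)) (Subtype.ext hϖw)
    (ν := IsIntegralClosure.mk' T ν hνR) ?_ ?_
  · rw [← hrank, ← IsFractionRing.finrank_eq R K T L]
  · exact (adjoin_simple_eq_top_iff_of_isAlgebraic (Algebra.IsAlgebraic.isAlgebraic γ)).mp hγ
  · rw [hν']
    exact (adjoin_simple_eq_top_iff_of_isAlgebraic (Algebra.IsAlgebraic.isAlgebraic ν)).mp hν
  · apply IsIntegralClosure.algebraMap_injective T R L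
    rw [map_pow, hν', hνϖ, ← IsScalarTower.algebraMap_apply S T L]
    rfl

end FieldTower

lemma exists_coprime_mul_modEq_gcd {r : ℕ} (v : ℕ) (hr : r ≠ 0) :
    ∃ m s, m.Coprime s ∧ r = r.gcd v * m ∧ s * v ≡ r.gcd v [MOD r] := by
  obtain ⟨m, a, hma, hrm, hva⟩ := Nat.exists_coprime r v
  have hm : m ≠ 0 := left_ne_zero_of_mul (hrm ▸ hr)
  obtain ⟨s, -, hs⟩ := Nat.exists_mul_mod_eq_of_coprime 1 hma.symm hm
  have hsa : s * a ≡ 1 [MOD m] := mul_comm a s ▸ hs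
  refine ⟨m, s, (Nat.coprime_of_mul_modEq_one a hsa).symm, hrm.trans (mul_comm _ _), ?_⟩
  have h := hsa.mul_right' (r.gcd v)
  rwa [one_mul, mul_assoc, ← hva, ← hrm] at h

section Generators

open IntermediateField

variable {K L : Type*} [Field K] [Field L] [Algebra K L]

lemma mem_of_pow_mem_of_pow_mem_of_coprime {E : IntermediateField K L} {x : L} {m n : ℕ}
    (hmn : m.Coprime n) (hm : x ^ m ∈ E) (hn : x ^ n ∈ E) : x ∈ E := by
  rcases eq_or_ne x 0 with rfl | hx
  · exact E.zero_mem
  have hbezout : x = (x ^ m) ^ m.gcdA n * (x ^ n) ^ m.gcdB n := by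
    rw [← zpow_natCast x m, ← zpow_natCast x n, ← zpow_mul, ← zpow_mul, ← zpow_add₀ hx,
      ← Nat.gcd_eq_gcd_ab, hmn.gcd_eq_one, Nat.cast_one, zpow_one]
  rw [hbezout]
  exact E.mul_mem (zpow_mem hm _) (zpow_mem hn _)

lemma adjoin_simple_algebraMap_mul {c : K} (hc : c ≠ 0) (x : L) :
    K⟮algebraMap K L c * x⟯ = K⟮x⟯ := by
  have hc' : algebraMap K L c ≠ 0 := by simpa using hc
  apply le_antisymm <;> rw [adjoin_simple_le_iff]
  · exact mul_mem (IntermediateField.algebraMap_mem _ c) (mem_adjoin_simple_self K x)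
  · have h := mul_mem (IntermediateField.algebraMap_mem K⟮algebraMap K L c * x⟯ c⁻¹)
      (mem_adjoin_simple_self K (algebraMap K L c * x))
    rwa [map_inv₀, inv_mul_cancel_left₀ hc'] at h

lemma adjoin_simple_algebraMap_mul_gen {c : K} (hc : c ≠ 0) (x : L) :
    K⟮algebraMap K K⟮x⟯ c * AdjoinSimple.gen K x⟯ = ⊤ := by
  rw [adjoin_simple_algebraMap_mul hc]
  exact lift_injective K⟮x⟯ (by rw [lift_adjoin_simple, lift_top, AdjoinSimple.coe_gen])

lemma adjoin_algebraMap_mul_pow_eq_top {x : L} (hx : K⟮x⟯ = ⊤) {m s : ℕ} (hms : m.Coprime s)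
    {c : K} (hc : c ≠ 0) : K⟮x ^ m⟯⟮algebraMap K L c * x ^ s⟯ = ⊤ := by
  have hmem : x ∈ K⟮x ^ m⟯⟮x ^ s⟯ := by
    refine mem_of_pow_mem_of_pow_mem_of_coprime hms ?_ (mem_adjoin_simple_self _ _)
    exact IntermediateField.algebraMap_mem K⟮x ^ m⟯⟮x ^ s⟯ (AdjoinSimple.gen K (x ^ m))
  rw [IsScalarTower.algebraMap_apply K K⟮x ^ m⟯ L,
    adjoin_simple_algebraMap_mul (by simpa using hc), ← top_le_iff,
    ← adjoin_eq_top_of_adjoin_eq_top K hx, adjoin_simple_le_iff]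
  exact hmem

end Generators

section RadicalExtension

open IntermediateField

variable {R K L : Type*} (T : Type*) [CommRing R] [IsDedekindDomain R] [CommRing T]
  [IsDedekindDomain T] [Field K] [Field L] [Algebra R T] [Module.Finite R T]
  [Module.IsTorsionFree R T] [Algebra R K] [IsFractionRing R K] [Algebra K L] [Algebra R L]
  [Algebra T L] [IsScalarTower R K L] [IsScalarTower R T L]
  [IsIntegralClosure T R L] [FiniteDimensional K L] [Algebra.IsSeparable K L]
  {P : Ideal R} [P.IsPrime]

theorem emultiplicity_relNorm_differentIdeal_of_pow_finrank_eq (hP0 : P ≠ ⊥) {β : R} {v : ℕ}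
    (hv : emultiplicity P (Ideal.span {β}) = v) {η : L} (hgen : K⟮η⟯ = ⊤) {r : ℕ}
    (hrank : Module.finrank K L = r) (hη : η ^ r = algebraMap R L β)
    (hnd : ((r.gcd v : ℕ) : R) ∉ P) :
    emultiplicity P (Ideal.relNorm R (differentIdeal R T)) =
      r * emultiplicity P (Ideal.span {(r : R)}) + (r - r.gcd v : ℕ) := by
  have hP := Ideal.prime_of_isPrime hP0 ‹_›
  have hr : r ≠ 0 := hrank ▸ Module.finrank_pos.ne'
  obtain ⟨m, s, hms, hrm, hsv⟩ := exists_coprime_mul_modEq_gcd v hr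
  set d := r.gcd v
  have hd : d ≠ 0 := Nat.gcd_ne_zero_left hr
  have hm : m ≠ 0 := right_ne_zero_of_mul (hrm ▸ hr)
  have hηK : η ^ r = algebraMap K L (algebraMap R K β) :=
    hη.trans (IsScalarTower.algebraMap_apply R K L β)
  obtain ⟨x, u, hx, hxu, hu⟩ := exists_pow_mul_eq_algebraMap hP K (k := 0) hd hv
    (Nat.modEq_zero_iff_dvd.mpr (r.gcd_dvd_right v))
  have hvs : emultiplicity P (Ideal.span {β ^ s}) = (s * v : ℕ) := by
    rw [emultiplicity_span_pow hP, hv, Nat.cast_mul]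
  obtain ⟨y, w, hy, hyw, hw⟩ := exists_pow_mul_eq_algebraMap hP K hr hvs hsv
  let ϖ : K⟮η ^ m⟯ := algebraMap K _ (y ^ m) * AdjoinSimple.gen K (η ^ m) ^ s
  have hγu : (algebraMap K K⟮η ^ m⟯ x * AdjoinSimple.gen K (η ^ m)) ^ d =
      algebraMap R K⟮η ^ m⟯ u := by
    apply (algebraMap K⟮η ^ m⟯ L).injective
    rw [IsScalarTower.algebraMap_apply R K K⟮η ^ m⟯, ← hxu]
    simp [mul_pow, ← pow_mul, mul_comm m, ← hrm, hηK]
  have hνϖ : (algebraMap K L y * η ^ s) ^ m = algebraMap K⟮η ^ m⟯ L ϖ := by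
    simp [ϖ, mul_pow, ← pow_mul, mul_comm m]
  have hϖw : ϖ ^ d = algebraMap R K⟮η ^ m⟯ w := by
    apply (algebraMap K⟮η ^ m⟯ L).injective
    rw [map_pow, ← hνϖ, ← pow_mul, mul_comm m d, ← hrm, mul_pow, pow_right_comm, hηK,
      IsScalarTower.algebraMap_apply R K K⟮η ^ m⟯, ← hyw]
    simp
  have : IsScalarTower R K⟮η ^ m⟯ L := .to₁₃₄ R K _ L
  rw [emultiplicity_relNorm_differentIdeal_of_radical_fieldTower T hP0 hnd hm (hrank.trans hrm)
    (emultiplicity_span_eq_zero_iff.mp hu) (adjoin_simple_algebraMap_mul_gen hx (η ^ m)) hγu hw hϖw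
    (adjoin_algebraMap_mul_pow_eq_top hgen hms hy) hνϖ, hrm, Nat.cast_mul (α := R),
    emultiplicity_span_mul hP, emultiplicity_span_eq_zero_iff.mpr hnd, zero_add, Nat.sub_one_mul,
    mul_comm d m]

end RadicalExtension

section Discriminant

attribute [local instance] FractionRing.liftAlgebra

lemma emultiplicity_eq_count_normalizedFactors_of_prime {R : Type*} [CommRing R]
    [IsDedekindDomain R] [DecidableEq (Ideal R)] {P I : Ideal R} (hP : Prime P) (hI : I ≠ ⊥) :
    emultiplicity P I = (normalizedFactors I).count P := by
  rw [emultiplicity_eq_count_normalizedFactors hP.irreducible hI, normalize_eq]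

lemma finrank_eq_of_irreducible_X_pow_sub_C {K L : Type*} [Field K] [Field L] [Algebra K L]
    {r : ℕ} {b : K} (hirr : Irreducible (X ^ r - C b)) {η : L} (hη : aeval η (X ^ r - C b) = 0)
    (hgen : IntermediateField.adjoin K {η} = ⊤) : Module.finrank K L = r := by
  have hr : r ≠ 0 := by
    rintro rfl
    exact hirr.natDegree_pos.ne' (by simp)
  have hmonic : (X ^ r - C b).Monic := monic_X_pow_sub_C b hr
  rw [← IntermediateField.finrank_top', ← hgen,
    IntermediateField.adjoin.finrank ⟨_, hmonic, hη⟩,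
    ← minpoly.eq_of_irreducible_of_monic hirr hη hmonic, natDegree_X_pow_sub_C]

lemma eq_one_of_irreducible_X_pow {K : Type*} [Field K] {r : ℕ}
    (hirr : Irreducible (X ^ r : K[X])) : r = 1 :=
  of_not_not fun hr ↦ not_irreducible_pow hr hirr

variable {R K L T : Type*} [CommRing R] [IsDedekindDomain R] [CommRing T]
  [IsDedekindDomain T] [Field K] [Field L] [Algebra R T] [Module.Finite R T]
  [Module.IsTorsionFree R T] [Algebra R K] [IsFractionRing R K] [Algebra K L] [Algebra R L]
  [Algebra T L] [IsScalarTower R K L] [IsScalarTower R T L]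
  [IsIntegralClosure T R L] [FiniteDimensional K L] [Algebra.IsSeparable K L]

theorem discriminant_valuation_radical_extension_general [DecidableEq (Ideal R)] (r : ℕ) (β : R)
    (hirr : Irreducible (X ^ r - C (algebraMap R K β) : K[X]))
    (η : L) (hroot : aeval η (X ^ r - C (algebraMap R K β) : K[X]) = 0)
    (hgen : IntermediateField.adjoin K {η} = ⊤)
    (P : Ideal R) (hP : P.IsPrime) (hPne : P ≠ ⊥)
    (hnd : ((r.gcd ((normalizedFactors (Ideal.span {β})).count P) : ℕ) : R) ∉ P) :
    (normalizedFactors (Ideal.spanNorm R (differentIdeal R T))).count P =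
      r * (normalizedFactors (Ideal.span {(r : R)})).count P + r -
        r.gcd ((normalizedFactors (Ideal.span {β})).count P) := by
  have hPprime := Ideal.prime_of_isPrime hPne hP
  have hrank := finrank_eq_of_irreducible_X_pow_sub_C hirr hroot hgen
  have hr : 0 < r := hrank ▸ Module.finrank_pos
  have hroot' : η ^ r = algebraMap R L β := by
    simpa [sub_eq_zero, IsScalarTower.algebraMap_apply R K L] using hroot
  -- If `β = 0` then `r = 1` and `L = K`, and `β`, `η` can be replaced by `1`, `1`.
  obtain ⟨β', η', hβ', hgen', hη', hgcd⟩ : ∃ (β' : R) (η' : L), β' ≠ 0 ∧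
      IntermediateField.adjoin K {η'} = ⊤ ∧ η' ^ r = algebraMap R L β' ∧
      r.gcd ((normalizedFactors (Ideal.span {β'})).count P) =
        r.gcd ((normalizedFactors (Ideal.span {β})).count P) := by
    by_cases hβ : β = 0
    · subst hβ
      obtain rfl : r = 1 := eq_one_of_irreducible_X_pow (K := K) (by simpa using hirr)
      obtain rfl : η = 0 := by simpa using hroot'
      exact ⟨1, 1, one_ne_zero, by simpa using hgen, by simp, by simp⟩
    · exact ⟨β, η, hβ, hgen, hroot', rfl⟩
  have key := emultiplicity_relNorm_differentIdeal_of_pow_finrank_eq T hPne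
    (emultiplicity_eq_count_normalizedFactors_of_prime hPprime (by simpa using hβ')) hgen' hrank
    hη' (hgcd ▸ hnd)
  have : IsFractionRing T L := IsIntegralClosure.isFractionRing_of_finite_extension R K L T
  have := isSeparable_fractionRing R T K L
  have hnorm : Ideal.relNorm R (differentIdeal R T) ≠ ⊥ :=
    mt Ideal.relNorm_eq_bot_iff.mp differentIdeal_ne_bot
  rw [emultiplicity_eq_count_normalizedFactors_of_prime hPprime hnorm] at key
  have hr0 : (r : R) ≠ 0 := by
    intro h
    simp [h, hr.ne'] at key
  rw [emultiplicity_eq_count_normalizedFactors_of_prime hPprime (by simpa using hr0), hgcd] at key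
  rw [Ideal.spanNorm_eq, Nat.add_sub_assoc (Nat.gcd_le_left _ hr)]
  exact mod_cast key

end Discriminant

/-- (Llorente–Nart) Let `g = X^r − β` be irreducible over `K` with root `η`, `L = K(η)`.
For every prime `P` of `𝓞 K` not dividing `gcd(r, v_P(β))`, the `P`-adic valuation of the
relative discriminant of `L|K` equals `r·v_P(r) + r − gcd(r, v_P(β))`. -/
theorem discriminant_valuation_radical_extension {K L : Type*} [Field K] [NumberField K]
    [Field L] [NumberField L] [Algebra K L]
    (r : ℕ) (hr : 0 < r) (β : 𝓞 K)
    (hirr : Irreducible (X ^ r - C (algebraMap (𝓞 K) K β) : K[X]))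
    (η : L) (hroot : aeval η (X ^ r - C (algebraMap (𝓞 K) K β) : K[X]) = 0)
    (hgen : IntermediateField.adjoin K {η} = ⊤)
    (P : Ideal (𝓞 K)) (hP : P.IsPrime) (hPne : P ≠ ⊥)
    (hnd : ((Nat.gcd r (idealVal P (Ideal.span {β})) : ℕ) : 𝓞 K) ∉ P) :
    idealVal P (Ideal.spanNorm (𝓞 K) (differentIdeal (𝓞 K) (𝓞 L))) =
      r * idealVal P (Ideal.span {(r : 𝓞 K)}) + r - Nat.gcd r (idealVal P (Ideal.span {β})) := by
  let := Classical.decEq (Ideal (𝓞 K))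
  exact discriminant_valuation_radical_extension_general r β hirr η hroot hgen P hP hPne hnd
end

section
/- For every number field K there exists a finite extension L of K such that the ring of integers O_L is generated as a ring by its group of units O_L^×. -/
/-!
If `u` is a root of `X ^ 2 - α * X + 1`, then `u` is a unit and `α = u + u⁻¹`, so every `α` becomes
a sum of two units in a quadratic extension; when `α ^ 2 - 4` is squarefree, the ring of integers
of that extension is moreover spanned over the old one by the units `1` and `u`.

Suppose `d * 𝓞 F` lies in the subring generated by units. Then it suffices to treat elements modulo
`d`, and a square sieve over `𝓞 F` shows that a class `x` modulo `d` with `x ^ 2 - 4` coprime to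
`d` contains an `α` with `α ^ 2 - 4` squarefree, so `x` becomes a sum of units. If `F` contains
`ζ₅`, then the sums `∑ k < j, ζ₅ ^ k` with `j < 5` are pairwise distinct modulo every prime, and
every element is a difference of two such `x`. Adjoining the roots for a basis of `𝓞 F` finishes
the proof, because `𝓞 L` stays spanned by units over `𝓞 F`.

Such a `d` exists once `F = ℚ(u)` with `u` a unit: take the discriminant of the powers of `u`.
-/

open NumberField

section UnitSubring

/-- The subring of `R` generated by its units. -/
def unitSubring (R : Type*) [Ring R] : Subring R :=
  Subring.closure {x | IsUnit x}

theorem mem_unitSubring_of_isUnit {R : Type*} [Ring R] {u : R} (hu : IsUnit u) :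
    u ∈ unitSubring R :=
  Subring.subset_closure hu

theorem map_mem_unitSubring {R S : Type*} [Ring R] [Ring S] (f : R →+* S) {x : R}
    (hx : x ∈ unitSubring R) : f x ∈ unitSubring S := by
  have hle : unitSubring R ≤ (unitSubring S).comap f :=
    Subring.closure_le.mpr fun _ hu ↦ mem_unitSubring_of_isUnit (hu.map f)
  exact hle hx

theorem isUnit_of_sq_sub_mul_add_one {R : Type*} [CommRing R] {a u : R}
    (hu : u ^ 2 - a * u + 1 = 0) : IsUnit u :=
  IsUnit.of_mul_eq_one (a - u) (by linear_combination -hu)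

theorem mem_unitSubring_of_sq_sub_mul_add_one {R : Type*} [CommRing R] {a u : R}
    (hu : u ^ 2 - a * u + 1 = 0) : a ∈ unitSubring R := by
  have hu' : IsUnit (a - u) := IsUnit.of_mul_eq_one u (by linear_combination -hu)
  simpa only [add_sub_cancel] using
    add_mem (mem_unitSubring_of_isUnit (isUnit_of_sq_sub_mul_add_one hu))
      (mem_unitSubring_of_isUnit hu')

/-- `B` is generated by its units as a module over `A`; this relative notion passes through
towers of extensions. -/
def IsSpannedByUnits (A B : Type*) [CommRing A] [CommRing B] [Algebra A B] : Prop :=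
  Submodule.span A {y : B | IsUnit y} = ⊤

namespace IsSpannedByUnits

theorem refl (A : Type*) [CommRing A] : IsSpannedByUnits A A :=
  Ideal.eq_top_of_isUnit_mem _ (Submodule.subset_span isUnit_one) isUnit_one

theorem trans {A B C : Type*} [CommRing A] [CommRing B] [CommRing C] [Algebra A B] [Algebra B C]
    [Algebra A C] [IsScalarTower A B C] (hAB : IsSpannedByUnits A B)
    (hBC : IsSpannedByUnits B C) : IsSpannedByUnits A C := by
  have smul_unit_mem (v : C) (hv : IsUnit v) (b : B) :
      b • v ∈ Submodule.span A {y : C | IsUnit y} := by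
    induction (hAB ▸ Submodule.mem_top : b ∈ Submodule.span A _) using
      Submodule.closure_induction with
    | zero => simp
    | add b c _ _ hb hc => simpa only [add_smul] using add_mem hb hc
    | smul_mem a u hu =>
      have huv : u • v ∈ {y : C | IsUnit y} :=
        Algebra.smul_def u v ▸ (IsUnit.map (algebraMap B C) hu).mul hv
      simpa only [smul_assoc] using Submodule.smul_mem _ a (Submodule.subset_span huv)
  refine Submodule.eq_top_iff'.mpr fun y ↦ ?_
  induction (hBC ▸ Submodule.mem_top : y ∈ Submodule.span B _) using
    Submodule.closure_induction with
  | zero => exact zero_mem _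
  | add y z _ _ hy hz => exact add_mem hy hz
  | smul_mem b v hv => exact smul_unit_mem v hv b

theorem mul_mem_unitSubring {A B : Type*} [CommRing A] [CommRing B] [Algebra A B]
    (hAB : IsSpannedByUnits A B) {a : A}
    (ha : ∀ x : A, algebraMap A B (a * x) ∈ unitSubring B) (y : B) :
    algebraMap A B a * y ∈ unitSubring B := by
  induction (hAB ▸ Submodule.mem_top : y ∈ Submodule.span A _) using
    Submodule.closure_induction with
  | zero => simp only [mul_zero, zero_mem]
  | add y z _ _ hy hz => simpa only [mul_add] using add_mem hy hz
  | smul_mem x u hu =>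
    rw [Algebra.smul_def, ← mul_assoc, ← map_mul]
    exact mul_mem (ha x) (mem_unitSubring_of_isUnit hu)

end IsSpannedByUnits

end UnitSubring

section QuadraticExtension

universe v

open IntermediateField

theorem exists_algEquiv_eq_sub {F Ω : Type*} [Field F] [Field Ω] [Algebra F Ω] [IsGalois F Ω]
    {u : Ω} {s t : F} (hu : u ^ 2 - algebraMap F Ω s * u + algebraMap F Ω t = 0)
    (huF : u ∉ Set.range (algebraMap F Ω)) :
    ∃ σ : Gal(Ω/F), σ u = algebraMap F Ω s - u := by
  simp only [InfiniteGalois.mem_range_algebraMap_iff_fixed, not_forall] at huF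
  obtain ⟨σ, hσ⟩ := huF
  have hσu : σ u ^ 2 - algebraMap F Ω s * σ u + algebraMap F Ω t = 0 := by
    simpa using congrArg σ hu
  refine ⟨σ, ?_⟩
  have hmul : (σ u - u) * (σ u - (algebraMap F Ω s - u)) = 0 := by linear_combination hσu - hu
  exact sub_eq_zero.mp ((mul_eq_zero.mp hmul).resolve_left (sub_ne_zero.mpr hσ))

theorem exists_eq_add_mul_of_mem_adjoin_of_quadratic {F Ω : Type*} [Field F] [Field Ω]
    [Algebra F Ω] {u : Ω} {s t : F}
    (hu : u ^ 2 - algebraMap F Ω s * u + algebraMap F Ω t = 0) {z : Ω} (hz : z ∈ F⟮u⟯) :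
    ∃ a b : F, z = algebraMap F Ω a + algebraMap F Ω b * u := by
  have hint : IsIntegral F u :=
    ⟨.X ^ 2 - .C s * .X + .C t, by monicity!, by simpa using hu⟩
  rw [← mem_toSubalgebra, adjoin_simple_toSubalgebra_of_isAlgebraic hint.isAlgebraic] at hz
  induction hz using Algebra.adjoin_induction with
  | mem x hx => exact ⟨0, 1, by simp [Set.mem_singleton_iff.mp hx]⟩
  | algebraMap r => exact ⟨r, 0, by simp⟩
  | add x y _ _ hx hy =>
    obtain ⟨a, b, rfl⟩ := hx
    obtain ⟨a', b', rfl⟩ := hy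
    exact ⟨a + a', b + b', by simp only [map_add]; ring⟩
  | mul x y _ _ hx hy =>
    obtain ⟨a, b, rfl⟩ := hx
    obtain ⟨a', b', rfl⟩ := hy
    refine ⟨a * a' - b * b' * t, a * b' + b * a' + b * b' * s, ?_⟩
    simp only [map_add, map_sub, map_mul]
    linear_combination algebraMap F Ω b * algebraMap F Ω b' * hu

theorem exists_eq_add_mul_isIntegral_of_mem_adjoin {A F Ω : Type*} [CommRing A] [Field F]
    [Field Ω] [Algebra A F] [Algebra F Ω] [Algebra A Ω] [IsScalarTower A F Ω] [IsGalois F Ω]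
    {u : Ω} {s t : F} (hu : u ^ 2 - algebraMap F Ω s * u + algebraMap F Ω t = 0) {z : Ω}
    (hz : z ∈ F⟮u⟯) (hzA : IsIntegral A z) :
    ∃ a b : F, z = algebraMap F Ω a + algebraMap F Ω b * u ∧
      IsIntegral A (b ^ 2 * (s ^ 2 - 4 * t)) := by
  obtain ⟨a, b, rfl⟩ := exists_eq_add_mul_of_mem_adjoin_of_quadratic hu hz
  by_cases huF : u ∈ Set.range (algebraMap F Ω)
  · obtain ⟨r, rfl⟩ := huF
    exact ⟨a + b * r, 0, by simp, by simpa using isIntegral_zero⟩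
  · obtain ⟨σ, hσ⟩ := exists_algEquiv_eq_sub hu huF
    refine ⟨a, b, rfl, ?_⟩
    have hσz : IsIntegral A (σ (algebraMap F Ω a + algebraMap F Ω b * u)) :=
      hzA.map (σ.toAlgHom.restrictScalars A)
    have hsq : algebraMap F Ω (b ^ 2 * (s ^ 2 - 4 * t)) =
        (algebraMap F Ω a + algebraMap F Ω b * u -
          σ (algebraMap F Ω a + algebraMap F Ω b * u)) ^ 2 := by
      simp only [map_add, map_mul, map_sub, map_pow, map_ofNat, AlgEquiv.commutes, hσ]
      linear_combination (-4) * algebraMap F Ω b ^ 2 * hu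
    rw [← isIntegral_algebraMap_iff (algebraMap F Ω).injective, hsq]
    exact (hzA.sub hσz).pow 2

theorem dvd_of_sq_dvd_sq_mul {M : Type*} [CommMonoidWithZero M] [GCDMonoid M]
    {x y d : M} (hd : Squarefree d) (h : y ^ 2 ∣ x ^ 2 * d) : y ∣ x := by
  obtain ⟨x', y', hx, hy, hcoprime⟩ := extract_gcd x y
  rw [gcd_isUnit_iff_isRelPrime] at hcoprime
  by_cases hg : gcd x y = 0
  · rw [hx, hg, zero_mul]
    exact dvd_zero y
  have hcancel : (gcd x y * y') ^ 2 ∣ (gcd x y * x') ^ 2 * d := by rwa [← hx, ← hy]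
  rw [mul_pow, mul_pow, mul_assoc, mul_dvd_mul_iff_left (pow_ne_zero 2 hg)] at hcancel
  have hy' : y' ^ 2 ∣ d := (hcoprime.symm.pow (m := 2) (n := 2)).dvd_of_dvd_mul_left hcancel
  have hunit : IsUnit y' := hd y' (sq y' ▸ hy')
  exact hy ▸ (hunit.mul_right_dvd.mpr (gcd_dvd_left x y))

theorem mem_range_algebraMap_of_isIntegral_sq_mul {A F : Type*} [CommRing A] [IsDedekindDomain A]
    [Field F] [Algebra A F] [IsFractionRing A F] {D : A} (hD : Squarefree (Ideal.span {D})) {b : F}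
    (hb : IsIntegral A (b ^ 2 * algebraMap A F D)) : b ∈ Set.range (algebraMap A F) := by
  obtain ⟨x, y, hy, rfl⟩ := IsFractionRing.div_surjective (A := A) b
  obtain ⟨c, hc⟩ := IsIntegrallyClosed.isIntegral_iff.mp hb
  have hy0 : algebraMap A F y ≠ 0 := IsFractionRing.to_map_ne_zero_of_mem_nonZeroDivisors hy
  have hxy : y ^ 2 * c = x ^ 2 * D := by
    apply IsFractionRing.injective A F
    simp only [map_mul, map_pow, hc]
    field_simp
  have hdvd : Ideal.span {y} ∣ Ideal.span {x} := by
    refine dvd_of_sq_dvd_sq_mul hD ?_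
    simp only [Ideal.span_singleton_pow, Ideal.span_singleton_mul_span_singleton]
    exact ⟨Ideal.span {c}, by rw [Ideal.span_singleton_mul_span_singleton, hxy]⟩
  obtain ⟨w, rfl⟩ := Ideal.mem_span_singleton.mp
    (Ideal.dvd_iff_le.mp hdvd (Ideal.mem_span_singleton_self x))
  exact ⟨w, by rw [map_mul, mul_div_cancel_left₀ _ hy0]⟩

theorem exists_eq_add_mul_of_squarefree_discrim {A F Ω : Type*} [CommRing A] [IsDedekindDomain A]
    [Field F] [Algebra A F] [IsFractionRing A F] [Field Ω] [Algebra F Ω] [Algebra A Ω]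
    [IsScalarTower A F Ω] [IsGalois F Ω] {u : Ω} {s t : A}
    (hu : u ^ 2 - algebraMap A Ω s * u + algebraMap A Ω t = 0)
    (hD : Squarefree (Ideal.span {s ^ 2 - 4 * t})) {z : Ω} (hz : z ∈ F⟮u⟯)
    (hzA : IsIntegral A z) : ∃ a b : A, z = algebraMap A Ω a + algebraMap A Ω b * u := by
  have huF : u ^ 2 - algebraMap F Ω (algebraMap A F s) * u +
      algebraMap F Ω (algebraMap A F t) = 0 := by
    simpa only [← IsScalarTower.algebraMap_apply] using hu
  obtain ⟨a, b, rfl, hb⟩ := exists_eq_add_mul_isIntegral_of_mem_adjoin huF hz hzA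
  obtain ⟨b, rfl⟩ := mem_range_algebraMap_of_isIntegral_sq_mul (b := b) hD
    (by simpa only [map_sub, map_mul, map_pow, map_ofNat] using hb)
  have huA : IsIntegral A u := ⟨.X ^ 2 - .C s * .X + .C t, by monicity!, by simpa using hu⟩
  have ha : IsIntegral A (algebraMap F Ω a) := by
    simpa only [← IsScalarTower.algebraMap_apply, add_sub_cancel_right] using
      hzA.sub (isIntegral_algebraMap (R := A) (x := b) |>.mul huA)
  obtain ⟨a, rfl⟩ := IsIntegrallyClosed.isIntegral_iff.mp
    ((isIntegral_algebraMap_iff (algebraMap F Ω).injective).mp ha)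
  exact ⟨a, b, by simp only [← IsScalarTower.algebraMap_apply]⟩

theorem exists_isGalois_adjoin_root_quadratic (F : Type v) [Field F] [CharZero F] (s t : F) :
    ∃ (L : Type v) (_ : Field L) (_ : Algebra F L) (u : L), FiniteDimensional F L ∧
      IsGalois F L ∧ u ^ 2 - algebraMap F L s * u + algebraMap F L t = 0 ∧ F⟮u⟯ = ⊤ := by
  let p : Polynomial F := .X ^ 2 - .C s * .X + .C t
  have hpdeg : p.degree = 2 := by simp only [p]; compute_degree!
  have hroot (v : p.SplittingField) :
      Polynomial.aeval v p = v ^ 2 - algebraMap F _ s * v + algebraMap F _ t := by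
    simp [p]
  obtain ⟨u, hu⟩ := (Polynomial.SplittingField.splits p).exists_eval_eq_zero (by simp [hpdeg])
  rw [Polynomial.eval_map_algebraMap, hroot] at hu
  refine ⟨p.SplittingField, inferInstance, inferInstance, u, inferInstance, {}, hu, ?_⟩
  suffices Algebra.adjoin F (p.rootSet p.SplittingField) ≤ F⟮u⟯.toSubalgebra by
    rwa [Polynomial.IsSplittingField.adjoin_rootSet, top_le_iff, ← top_toSubalgebra,
      toSubalgebra_inj] at this
  refine Algebra.adjoin_le fun v hv ↦ ?_
  have hv : v ^ 2 - algebraMap F _ s * v + algebraMap F _ t = 0 :=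
    hroot v ▸ Polynomial.aeval_eq_zero_of_mem_rootSet hv
  have hmul : (v - u) * (v - (algebraMap F _ s - u)) = 0 := by linear_combination hv - hu
  rcases mul_eq_zero.mp hmul with h | h
  · exact sub_eq_zero.mp h ▸ mem_adjoin_simple_self F u
  · exact sub_eq_zero.mp h ▸ sub_mem (F⟮u⟯.algebraMap_mem s) (mem_adjoin_simple_self F u)

theorem exists_numberField_adjoin_root_sq_sub_mul_add_one {F : Type v} [Field F] [NumberField F]
    (α : 𝓞 F) :
    ∃ (L : Type v) (_ : Field L) (_ : NumberField L) (_ : Algebra F L) (u : 𝓞 L),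
      IsGalois F L ∧ u ^ 2 - algebraMap (𝓞 F) (𝓞 L) α * u + 1 = 0 ∧ F⟮(u : L)⟯ = ⊤ := by
  obtain ⟨L, _, _, u, _, hL, hu, htop⟩ := exists_isGalois_adjoin_root_quadratic F (α : F) 1
  rw [map_one] at hu
  have : NumberField L := NumberField.of_module_finite F L
  have hint : IsIntegral (𝓞 F) u :=
    ⟨.X ^ 2 - .C α * .X + 1, by monicity!, by
      simpa [IsScalarTower.algebraMap_apply (𝓞 F) F L] using hu⟩
  obtain ⟨w, rfl⟩ : ∃ w : 𝓞 L, (w : L) = u := ⟨⟨u, isIntegral_trans u hint⟩, rfl⟩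
  refine ⟨L, _, this, _, w, hL, ?_, htop⟩
  apply RingOfIntegers.coe_injective
  simpa [← IsScalarTower.algebraMap_apply] using hu

theorem exists_isSpannedByUnits_of_squarefree {F : Type v} [Field F] [NumberField F] {α : 𝓞 F}
    (hα : Squarefree (Ideal.span {α ^ 2 - 4})) :
    ∃ (L : Type v) (_ : Field L) (_ : NumberField L) (_ : Algebra F L),
      IsSpannedByUnits (𝓞 F) (𝓞 L) ∧ algebraMap (𝓞 F) (𝓞 L) α ∈ unitSubring (𝓞 L) := by
  obtain ⟨L, _, _, _, u, _, hu, htop⟩ := exists_numberField_adjoin_root_sq_sub_mul_add_one α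
  refine ⟨L, _, ‹_›, _, Submodule.eq_top_iff'.mpr fun z ↦ ?_,
    mem_unitSubring_of_sq_sub_mul_add_one hu⟩
  have huL : (u : L) ^ 2 - algebraMap (𝓞 F) L α * u + algebraMap (𝓞 F) L 1 = 0 := by
    simpa [← IsScalarTower.algebraMap_apply] using congrArg (algebraMap (𝓞 L) L) hu
  obtain ⟨a, b, hab⟩ := exists_eq_add_mul_of_squarefree_discrim (F := F) (z := (z : L)) huL
    (by simpa using hα) (htop ▸ mem_top) (RingOfIntegers.isIntegral_coe z).tower_top
  have hz : z = a • 1 + b • u := by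
    apply RingOfIntegers.coe_injective
    simpa [Algebra.smul_def, ← IsScalarTower.algebraMap_apply] using hab
  rw [hz]
  exact add_mem (Submodule.smul_mem _ a (Submodule.subset_span isUnit_one))
    (Submodule.smul_mem _ b (Submodule.subset_span (isUnit_of_sq_sub_mul_add_one hu)))

end QuadraticExtension

section Counting

open Filter Asymptotics

theorem summable_inv_sq_of_card_le_isBigO {α : Type*} {f : α → ℕ}
    (hfin : ∀ n, Finite {a // f a ≤ n})
    (hcard : (fun n : ℕ ↦ (Nat.card {a // f a ≤ n} : ℝ)) =O[atTop] fun n : ℕ ↦ (n : ℝ)) :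
    Summable fun a ↦ ((f a : ℝ) ^ 2)⁻¹ := by
  have hfiber (n : ℕ) : Finite {a // f a = n} :=
    Finite.of_injective (fun a ↦ (⟨a, a.2.le⟩ : {a // f a ≤ n}))
      fun a b h ↦ Subtype.ext (congrArg (fun c ↦ c.1) h)
  let g (n : ℕ) : ℝ := Nat.card {a // f a = n}
  have hsum : (fun n : ℕ ↦ ∑ k ∈ Finset.Icc 1 n, g k) =O[atTop] fun n : ℕ ↦ (n : ℝ) ^ (1 : ℝ) := by
    simp only [Real.rpow_one]
    refine IsBigO.trans (.of_norm_le fun n ↦ ?_) hcard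
    rw [Real.norm_of_nonneg (Finset.sum_nonneg fun _ _ ↦ Nat.cast_nonneg _),
      ← Nat.cast_sum, Nat.cast_le]
    calc ∑ k ∈ Finset.Icc 1 n, Nat.card {a // f a = k}
        ≤ ∑ k ∈ Finset.Icc 0 n, Nat.card {a // f a = k} :=
          Finset.sum_le_sum_of_subset (Finset.Icc_subset_Icc_left zero_le_one)
      _ = Nat.card (f ⁻¹' (Finset.Icc 0 n)) :=
          (Finset.card_preimage_eq_sum_card_image_eq fun k _ ↦ hfiber k).symm
      _ = Nat.card {a // f a ≤ n} := by simp [Set.coe_eq_subtype]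
  have hL : LSeriesSummable (fun n ↦ g n) 2 :=
    LSeriesSummable_of_sum_norm_bigO_and_nonneg hsum (fun _ ↦ Nat.cast_nonneg _) zero_le_one
      (by norm_num)
  have hg : Summable fun n : ℕ ↦ g n * ((n : ℝ) ^ 2)⁻¹ := by
    refine hL.norm.congr fun n ↦ ?_
    rcases eq_or_ne n 0 with rfl | hn
    · simp
    · simp [hn, g, div_eq_mul_inv]
  rw [← (Equiv.sigmaFiberEquiv f).summable_iff]
  refine (summable_sigma_of_nonneg fun _ ↦ inv_nonneg.mpr (sq_nonneg _)).mpr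
    ⟨fun n ↦ Summable.of_finite, hg.congr fun n ↦ ?_⟩
  have hconst (a : {a // f a = n}) :
      ((f (Equiv.sigmaFiberEquiv f ⟨n, a⟩) : ℝ) ^ 2)⁻¹ = ((n : ℝ) ^ 2)⁻¹ := by
    simp [Equiv.sigmaFiberEquiv, a.2]
  simp only [hconst, tsum_const, nsmul_eq_mul, g]

theorem card_absNorm_le_isBigO (F : Type*) [Field F] [NumberField F] :
    (fun n : ℕ ↦ (Nat.card {I : Ideal (𝓞 F) // Ideal.absNorm I ≤ n} : ℝ)) =O[atTop]
      fun n : ℕ ↦ (n : ℝ) := by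
  have htends := (NumberField.Ideal.tendsto_norm_le_div_atTop F).comp
    (tendsto_natCast_atTop_atTop (R := ℝ))
  simpa only [Nat.cast_le, Function.comp_def] using isBigO_of_div_tendsto_nhds
    ((eventually_gt_atTop 0).mono fun n hn h ↦ absurd h (by positivity)) _ htends

theorem summable_inv_sq_absNorm (F : Type*) [Field F] [NumberField F] :
    Summable fun I : Ideal (𝓞 F) ↦ ((Ideal.absNorm I : ℝ) ^ 2)⁻¹ :=
  summable_inv_sq_of_card_le_isBigO (fun n ↦ Ideal.finite_setOfPred_absNorm_le n)
    (card_absNorm_le_isBigO F)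

end Counting

section CoordBox

variable {ι : Type*} [Fintype ι] {M : Type*} [AddCommGroup M]

open Classical in
/-- The elements of a free abelian group whose coordinates all lie in `{0, …, X - 1}`. -/
noncomputable def coordBox (b : Module.Basis ι ℤ M) (X : ℕ) : Finset M :=
  (Fintype.piFinset fun _ ↦ Finset.Ico (0 : ℤ) X).map b.equivFun.symm.toEquiv.toEmbedding

theorem mem_coordBox {b : Module.Basis ι ℤ M} {X : ℕ} {a : M} :
    a ∈ coordBox b X ↔ ∀ i, b.repr a i ∈ Finset.Ico (0 : ℤ) X := by
  simp only [coordBox, Finset.mem_map_equiv, Fintype.mem_piFinset]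
  rfl

theorem card_coordBox (b : Module.Basis ι ℤ M) (X : ℕ) :
    (coordBox b X).card = X ^ Fintype.card ι := by
  simp [coordBox]

-- Cut the box into cells of side `t`: each contains at most one element of `E`.
theorem card_le_of_forall_abs_repr_sub_lt {b : Module.Basis ι ℤ M} {X t : ℕ} (ht : 0 < t)
    {E : Finset M} (hE : E ⊆ coordBox b X)
    (hsep : ∀ a ∈ E, ∀ a' ∈ E, (∀ i, |b.repr (a - a') i| < t) → a = a') :
    E.card ≤ (X / t + 1) ^ Fintype.card ι := by
  classical
  have ht' : (0 : ℤ) < t := by exact_mod_cast ht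
  have hcells : (Fintype.piFinset fun _ : ι ↦ Finset.Ico (0 : ℤ) ((X / t + 1 : ℕ) : ℤ)).card =
      (X / t + 1) ^ Fintype.card ι := by
    simp only [Fintype.card_piFinset, Int.card_Ico, sub_zero, Int.toNat_natCast,
      Finset.prod_const, Finset.card_univ]
  rw [← hcells]
  refine Finset.card_le_card_of_injOn (fun a i ↦ b.repr a i / t) (fun a ha ↦ ?_)
    fun a ha a' ha' haa' ↦ hsep a ha a' ha' fun i ↦ ?_
  · refine Finset.mem_coe.mpr (Fintype.mem_piFinset.mpr fun i ↦ ?_)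
    obtain ⟨h0, hX⟩ := Finset.mem_Ico.mp (mem_coordBox.mp (hE ha) i)
    refine Finset.mem_Ico.mpr ⟨Int.ediv_nonneg h0 ht'.le, ?_⟩
    push_cast
    exact Int.lt_add_one_of_le (Int.ediv_le_ediv ht' hX.le)
  · rw [map_sub, Finsupp.sub_apply]
    have hcell : b.repr a i / t = b.repr a' i / t := congrFun haa' i
    have hmod := Int.emod_lt_of_pos (b.repr a i) ht'
    have hmod' := Int.emod_lt_of_pos (b.repr a' i) ht'
    have hnonneg := Int.emod_nonneg (b.repr a i) ht'.ne'
    have hnonneg' := Int.emod_nonneg (b.repr a' i) ht'.ne'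
    rw [← Int.mul_ediv_add_emod (b.repr a i) t, ← Int.mul_ediv_add_emod (b.repr a' i) t, hcell,
      add_sub_add_left_eq_sub, abs_lt]
    lia

end CoordBox

section IdealCosets

variable {ι : Type*} [Fintype ι] {R : Type*} [CommRing R]

theorem exists_natAbs_norm_le [IsDomain R] (b : Module.Basis ι ℤ R) :
    ∃ C : ℕ, 0 < C ∧ ∀ (a : R) (y : ℕ), (∀ i, |b.repr a i| ≤ y) →
      (Algebra.norm ℤ a).natAbs ≤ C * y ^ Fintype.card ι := by
  classical
  have hpos := ClassGroup.normBound_pos AbsoluteValue.abs b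
  refine ⟨(ClassGroup.normBound AbsoluteValue.abs b).toNat, by lia, fun a y hy ↦ ?_⟩
  zify
  rw [Int.toNat_of_nonneg hpos.le]
  exact ClassGroup.norm_le AbsoluteValue.abs b a hy

theorem exists_natAbs_norm_mul_add_le [IsDomain R] (b : Module.Basis ι ℤ R) (D e : R) :
    ∃ A : ℕ, ∀ X : ℕ, 0 < X → ∀ γ ∈ coordBox b X,
      (Algebra.norm ℤ (D * γ + e)).natAbs ≤ A * X ^ Fintype.card ι := by
  obtain ⟨C, -, hC⟩ := exists_natAbs_norm_le b
  let B (k : ι) : ℕ := ∑ i, (b.repr (D * b i) k).natAbs + (b.repr e k).natAbs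
  refine ⟨C * (∑ k, B k) ^ Fintype.card ι, fun X hX γ hγ ↦ ?_⟩
  rw [mul_assoc, ← mul_pow]
  refine hC _ _ fun k ↦ ?_
  have hrepr : b.repr (D * γ + e) k = ∑ i, b.repr γ i * b.repr (D * b i) k + b.repr e k := by
    conv_lhs => rw [← b.sum_repr γ]
    simp only [Finset.mul_sum, mul_smul_comm, map_sum, map_add, map_smul, Finsupp.add_apply,
      Finsupp.finsetSum_apply, Finsupp.smul_apply, smul_eq_mul]
  have hcoord (i : ι) : |b.repr γ i| ≤ X := by
    obtain ⟨h0, hX⟩ := Finset.mem_Ico.mp (mem_coordBox.mp hγ i)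
    exact (abs_of_nonneg h0).trans_le hX.le
  have hX' : (1 : ℤ) ≤ X := by exact_mod_cast hX
  calc |b.repr (D * γ + e) k|
      ≤ ∑ i, |b.repr γ i| * |b.repr (D * b i) k| + |b.repr e k| := by
        rw [hrepr]
        refine (abs_add_le _ _).trans (add_le_add_left ?_ _)
        simpa only [abs_mul] using
          Finset.abs_sum_le_sum_abs (fun i ↦ b.repr γ i * b.repr (D * b i) k) Finset.univ
    _ ≤ ∑ i, X * |b.repr (D * b i) k| + X * |b.repr e k| := by
        gcongr with i
        · exact hcoord i
        · exact le_mul_of_one_le_left (abs_nonneg _) hX'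
    _ = (B k : ℤ) * X := by
        simp only [B, Nat.cast_add, Nat.cast_sum, Int.natCast_natAbs, ← Finset.mul_sum]
        ring
    _ ≤ ((∑ k, B k) * X : ℕ) := by
        exact_mod_cast Nat.mul_le_mul_right X
          (Finset.single_le_sum (fun _ _ ↦ Nat.zero_le _) (Finset.mem_univ k))

theorem exists_le_mul_pow_and_mul_pred_pow_lt {C N n : ℕ} (hC : 0 < C) (hN : 0 < N) (hn : n ≠ 0) :
    ∃ t : ℕ, 0 < t ∧ N ≤ C * t ^ n ∧ C * (t - 1) ^ n < N := by
  classical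
  have hex : ∃ t : ℕ, N ≤ C * t ^ n :=
    ⟨N, (Nat.le_self_pow hn N).trans (Nat.le_mul_of_pos_left _ hC)⟩
  have hpos : 0 < Nat.find hex := by
    rw [Nat.find_pos]
    simpa [hn] using hN.ne'
  exact ⟨Nat.find hex, hpos, Nat.find_spec hex,
    not_le.mp (Nat.find_min hex (Nat.sub_lt hpos one_pos))⟩

theorem exists_card_le_of_forall_sub_mem [IsDedekindDomain R] [Module.Free ℤ R]
    (b : Module.Basis ι ℤ R) :
    ∃ C : ℝ, 0 < C ∧ ∀ (I : Ideal R) (X : ℕ) (E : Finset R), I ≠ ⊥ → E ⊆ coordBox b X →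
      (∀ a ∈ E, ∀ a' ∈ E, a - a' ∈ I) →
      (E.card : ℝ) ≤ C * (X ^ Fintype.card ι / Ideal.absNorm I + 1) := by
  have := Module.Finite.of_basis b
  obtain ⟨C, hCpos, hC⟩ := exists_natAbs_norm_le b
  have hC1 : (1 : ℝ) ≤ C := by exact_mod_cast hCpos
  set n := Fintype.card ι
  refine ⟨2 ^ (n - 1) * C, by positivity, fun I X E hI hE hEI ↦ ?_⟩
  have hN : 0 < Ideal.absNorm I := Nat.pos_of_ne_zero (Ideal.absNorm_eq_zero_iff.not.mpr hI)
  have hn : n ≠ 0 := (Fintype.card_pos_iff.mpr b.index_nonempty).ne'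
  obtain ⟨t, ht, hNt, htN⟩ := exists_le_mul_pow_and_mul_pred_pow_lt hCpos hN hn
  have hcard : E.card ≤ (X / t + 1) ^ n := by
    refine card_le_of_forall_abs_repr_sub_lt ht hE fun a ha a' ha' hlt ↦ ?_
    have hnorm : (Algebra.norm ℤ (a - a')).natAbs < Ideal.absNorm I :=
      (hC _ (t - 1) fun i ↦ by have := hlt i; lia).trans_lt htN
    have hdvd : Ideal.absNorm I ∣ (Algebra.norm ℤ (a - a')).natAbs :=
      Int.natCast_dvd.mp (Ideal.absNorm_dvd_norm_of_mem (hEI a ha a' ha'))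
    have hzero := Int.natAbs_eq_zero.mp (Nat.eq_zero_of_dvd_of_lt hdvd hnorm)
    exact sub_eq_zero.mp (Algebra.norm_eq_zero_iff.mp hzero)
  have hN' : (0 : ℝ) < Ideal.absNorm I := by exact_mod_cast hN
  have ht' : (0 : ℝ) < t := by exact_mod_cast ht
  have hscale : ((X : ℝ) / t) ^ n ≤ C * (X ^ n / Ideal.absNorm I) := by
    have hNt' : (Ideal.absNorm I : ℝ) ≤ C * t ^ n := by exact_mod_cast hNt
    rw [div_pow, ← mul_div_assoc, div_le_div_iff₀ (pow_pos ht' n) hN']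
    calc (X : ℝ) ^ n * Ideal.absNorm I ≤ X ^ n * (C * t ^ n) := by gcongr
      _ = C * X ^ n * t ^ n := by ring
  calc (E.card : ℝ) ≤ (X / t + 1) ^ n := by
        refine (Nat.cast_le.mpr hcard).trans ?_
        push_cast
        gcongr
        exact Nat.cast_div_le
    _ ≤ 2 ^ (n - 1) * ((X / t) ^ n + 1 ^ n) := add_pow_le (by positivity) zero_le_one n
    _ ≤ 2 ^ (n - 1) * (C * (X ^ n / Ideal.absNorm I) + C) := by
        rw [one_pow]
        gcongr
    _ = 2 ^ (n - 1) * C * (X ^ n / Ideal.absNorm I + 1) := by ring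

end IdealCosets

section SquareSieve

variable {ι : Type*} [Fintype ι]

section Dedekind

variable {R : Type*} [CommRing R] [IsDedekindDomain R] [Module.Free ℤ R]

open Classical in
theorem exists_card_mul_add_mem_sq_le (b : Module.Basis ι ℤ R) :
    ∃ C : ℝ, 0 < C ∧ ∀ (D e : R) (q : Ideal R) (X : ℕ), q.IsMaximal → q ≠ ⊥ → D ∉ q →
      ((coordBox b X).filter fun γ ↦ D * γ + e ∈ q ^ 2).card ≤
        C * (X ^ Fintype.card ι * ((Ideal.absNorm q : ℝ) ^ 2)⁻¹ + 1) := by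
  obtain ⟨C, hC0, hC⟩ := exists_card_le_of_forall_sub_mem b
  refine ⟨C, hC0, fun D e q X hq hq0 hD ↦ ?_⟩
  rw [← div_eq_mul_inv, ← Nat.cast_pow (Ideal.absNorm q), ← map_pow]
  refine hC (q ^ 2) X _ (pow_ne_zero 2 hq0) (Finset.filter_subset _ _) fun γ hγ γ' hγ' ↦ ?_
  have hmul : D * (γ - γ') ∈ q ^ 2 := by
    convert sub_mem (Finset.mem_filter.mp hγ).2 (Finset.mem_filter.mp hγ').2 using 1
    ring
  exact (Ideal.IsPrime.mul_mem_pow q hmul).resolve_left hD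

open Classical in
theorem exists_card_exists_mul_add_mem_sq_le (b : Module.Basis ι ℤ R) :
    ∃ C : ℝ, 0 < C ∧ ∀ (D e : R) (Q : Finset (Ideal R)) (X : ℕ),
      (∀ q ∈ Q, q.IsMaximal ∧ q ≠ ⊥ ∧ D ∉ q) →
      ((coordBox b X).filter fun γ ↦ ∃ q ∈ Q, D * γ + e ∈ q ^ 2).card ≤
        C * (X ^ Fintype.card ι * ∑ q ∈ Q, ((Ideal.absNorm q : ℝ) ^ 2)⁻¹ + Q.card) := by
  obtain ⟨C, hC0, hC⟩ := exists_card_mul_add_mem_sq_le b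
  refine ⟨C, hC0, fun D e Q X hQ ↦ ?_⟩
  have hcover : ((coordBox b X).filter fun γ ↦ ∃ q ∈ Q, D * γ + e ∈ q ^ 2) ⊆
      Q.biUnion fun q ↦ (coordBox b X).filter fun γ ↦ D * γ + e ∈ q ^ 2 := fun γ hγ ↦ by
    obtain ⟨hγ, q, hq, hmem⟩ := Finset.mem_filter.mp hγ
    exact Finset.mem_biUnion.mpr ⟨q, hq, Finset.mem_filter.mpr ⟨hγ, hmem⟩⟩
  calc _ ≤ ((∑ q ∈ Q, ((coordBox b X).filter fun γ ↦ D * γ + e ∈ q ^ 2).card : ℕ) : ℝ) :=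
        Nat.cast_le.mpr ((Finset.card_le_card hcover).trans Finset.card_biUnion_le)
    _ ≤ ∑ q ∈ Q, C * (X ^ Fintype.card ι * ((Ideal.absNorm q : ℝ) ^ 2)⁻¹ + 1) := by
        rw [Nat.cast_sum]
        exact Finset.sum_le_sum fun q hq ↦ hC D e q X (hQ q hq).1 (hQ q hq).2.1 (hQ q hq).2.2
    _ = C * (X ^ Fintype.card ι * ∑ q ∈ Q, ((Ideal.absNorm q : ℝ) ^ 2)⁻¹ + Q.card) := by
        rw [← Finset.mul_sum, Finset.sum_add_distrib, ← Finset.mul_sum, Finset.sum_const,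
          nsmul_eq_mul, mul_one]

theorem exists_absNorm_le_of_mul_add_mem_sq (b : Module.Basis ι ℤ R) (D e : R) :
    ∃ A : ℕ, 0 < A ∧ ∀ W : ℕ, 0 < W → ∀ γ ∈ coordBox b (W ^ 2), D * γ + e ≠ 0 →
      ∀ q : Ideal R, D * γ + e ∈ q ^ 2 → Ideal.absNorm q ≤ A * W ^ Fintype.card ι := by
  have := Module.Finite.of_basis b
  obtain ⟨A, hA⟩ := exists_natAbs_norm_mul_add_le b D e
  refine ⟨A + 1, A.succ_pos, fun W hW γ hγ hne q hq ↦ ?_⟩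
  have hdvd : Ideal.absNorm q ^ 2 ∣ (Algebra.norm ℤ (D * γ + e)).natAbs := by
    rw [← map_pow]
    exact Int.natCast_dvd.mp (Ideal.absNorm_dvd_norm_of_mem hq)
  refine (Nat.pow_le_pow_iff_left two_ne_zero).mp ?_
  calc Ideal.absNorm q ^ 2 ≤ (Algebra.norm ℤ (D * γ + e)).natAbs :=
        Nat.le_of_dvd (Int.natAbs_pos.mpr (Algebra.norm_ne_zero_iff.mpr hne)) hdvd
    _ ≤ A * (W ^ 2) ^ Fintype.card ι := hA _ (pow_pos hW 2) γ hγ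
    _ ≤ (A + 1) ^ 2 * (W ^ 2) ^ Fintype.card ι := by gcongr; nlinarith
    _ = ((A + 1) * W ^ Fintype.card ι) ^ 2 := by ring

end Dedekind

variable {F : Type*} [Field F] [NumberField F]

-- In a box of side `W ^ 2` only `q` of norm `O(W ^ n)` matter: their number is negligible against
-- the volume `W ^ (2 * n)`, and the main terms are the tail of a convergent series.
open Classical in
theorem exists_finset_forall_card_mul_add_mem_sq_le (b : Module.Basis ι ℤ (𝓞 F)) {ε : ℝ}
    (hε : 0 < ε) :
    ∃ T : Finset (Ideal (𝓞 F)), ∀ D e : 𝓞 F, (∀ γ, D * γ + e ≠ 0) → ∃ B : ℝ, ∀ W : ℕ, 0 < W →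
        ((coordBox b (W ^ 2)).filter fun γ ↦
          ∃ q : Ideal (𝓞 F), q.IsMaximal ∧ q ∉ T ∧ D ∉ q ∧ D * γ + e ∈ q ^ 2).card ≤
        ε * (W ^ Fintype.card ι) ^ 2 + B * W ^ Fintype.card ι := by
  obtain ⟨C, hC0, hC⟩ := exists_card_exists_mul_add_mem_sq_le b
  obtain ⟨T, hT⟩ := summable_iff_vanishing_norm.mp (summable_inv_sq_absNorm F) (ε / C)
    (div_pos hε hC0)
  obtain ⟨c, -, hc⟩ := Asymptotics.bound_of_isBigO_nat_atTop (card_absNorm_le_isBigO F)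
  refine ⟨T, fun D e hne ↦ ?_⟩
  obtain ⟨A, hA0, hA⟩ := exists_absNorm_le_of_mul_add_mem_sq b D e
  refine ⟨C * (c * A), fun W hW ↦ ?_⟩
  set n := Fintype.card ι
  let bounded : Finset (Ideal (𝓞 F)) :=
    (Ideal.finite_setOfPred_absNorm_le (S := 𝓞 F) (A * W ^ n)).toFinset
  let Q : Finset (Ideal (𝓞 F)) := bounded.filter fun q ↦ q.IsMaximal ∧ q ∉ T ∧ D ∉ q
  have hQ : (Q.card : ℝ) ≤ c * (A * W ^ n) := by
    refine (Nat.cast_le.mpr (Finset.card_filter_le bounded _)).trans ?_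
    have hcount := hc (x := A * W ^ n) (by positivity)
    rw [Real.norm_natCast, Real.norm_natCast] at hcount
    rw [← Nat.card_eq_card_finite_toFinset, ← Nat.cast_pow, ← Nat.cast_mul]
    exact hcount
  have htail : ∑ q ∈ Q, ((Ideal.absNorm q : ℝ) ^ 2)⁻¹ ≤ ε / C :=
    (le_abs_self _).trans (hT Q (Finset.disjoint_left.mpr fun q hq ↦
      (Finset.mem_filter.mp hq).2.2.1)).le
  calc _ ≤ (((coordBox b (W ^ 2)).filter fun γ ↦ ∃ q ∈ Q, D * γ + e ∈ q ^ 2).card : ℝ) := by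
        refine Nat.cast_le.mpr (Finset.card_le_card fun γ hγ ↦ ?_)
        obtain ⟨hγ, q, hq, hqT, hD, hmem⟩ := Finset.mem_filter.mp hγ
        have hbounded : q ∈ bounded := by simpa [bounded] using hA W hW γ hγ (hne γ) q hmem
        exact Finset.mem_filter.mpr
          ⟨hγ, q, Finset.mem_filter.mpr ⟨hbounded, hq, hqT, hD⟩, hmem⟩
    _ ≤ C * ((W ^ 2 : ℕ) ^ n * ∑ q ∈ Q, ((Ideal.absNorm q : ℝ) ^ 2)⁻¹ + Q.card) := by
        refine hC D e Q (W ^ 2) fun q hq ↦ ?_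
        obtain ⟨-, hq, -, hD⟩ := Finset.mem_filter.mp hq
        exact ⟨hq, Ring.ne_bot_of_isMaximal_of_not_isField hq (RingOfIntegers.not_isField F), hD⟩
    _ ≤ C * ((W ^ 2 : ℕ) ^ n * (ε / C) + c * (A * W ^ n)) := by gcongr
    _ = ε * (W ^ n) ^ 2 + C * (c * A) * W ^ n := by
        push_cast
        field_simp
        ring

open Classical in
theorem exists_forall_not_of_card_filter_coordBox_le [Nonempty ι] {M : Type*} [AddCommGroup M]
    (b : Module.Basis ι ℤ M) {κ : Type*} [Fintype κ] (bad : κ → M → Prop) (B : κ → ℝ)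
    (hbad : ∀ i, ∀ W : ℕ, 0 < W → ((coordBox b (W ^ 2)).filter (bad i)).card ≤
      1 / (2 * (Fintype.card κ + 1)) * ((W : ℝ) ^ Fintype.card ι) ^ 2 +
        B i * W ^ Fintype.card ι) :
    ∃ γ, ∀ i, ¬ bad i γ := by
  by_contra! hall
  obtain ⟨W, hW⟩ := exists_nat_gt (max (2 * ∑ i, B i) 0)
  obtain ⟨hBW, hW0⟩ := max_lt_iff.mp hW
  set n := Fintype.card ι with hn
  have hWn : (W : ℝ) ≤ W ^ n := by exact_mod_cast Nat.le_self_pow Fintype.card_ne_zero W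
  have hcover : coordBox b (W ^ 2) ⊆
      Finset.univ.biUnion fun i ↦ (coordBox b (W ^ 2)).filter (bad i) := fun γ hγ ↦ by
    obtain ⟨i, hi⟩ := hall γ
    exact Finset.mem_biUnion.mpr ⟨i, Finset.mem_univ i, Finset.mem_filter.mpr ⟨hγ, hi⟩⟩
  have hcard := (Finset.card_le_card hcover).trans Finset.card_biUnion_le
  rw [card_coordBox, ← hn] at hcard
  have hshare : (Fintype.card κ : ℝ) * (1 / (2 * (Fintype.card κ + 1))) ≤ 1 / 2 := by
    rw [mul_one_div, div_le_div_iff₀ (by positivity) two_pos]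
    linarith
  refine lt_irrefl (((W : ℝ) ^ n) ^ 2) ?_
  calc ((W : ℝ) ^ n) ^ 2 = ((W ^ 2) ^ n : ℕ) := by push_cast; ring
    _ ≤ (∑ i, ((coordBox b (W ^ 2)).filter (bad i)).card : ℕ) := Nat.cast_le.mpr hcard
    _ ≤ ∑ i, (1 / (2 * (Fintype.card κ + 1)) * ((W : ℝ) ^ n) ^ 2 + B i * W ^ n) := by
      rw [Nat.cast_sum]
      exact Finset.sum_le_sum fun i _ ↦ hbad i W (by exact_mod_cast hW0)
    _ = Fintype.card κ * (1 / (2 * (Fintype.card κ + 1))) * ((W : ℝ) ^ n) ^ 2 +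
        (∑ i, B i) * W ^ n := by
      rw [Finset.sum_add_distrib, Finset.sum_const, Finset.card_univ,
        nsmul_eq_mul, mul_assoc, Finset.sum_mul]
    _ < 1 / 2 * ((W : ℝ) ^ n) ^ 2 + W ^ n / 2 * W ^ n := by
      refine add_lt_add_of_le_of_lt (by gcongr) (mul_lt_mul_of_pos_right ?_ (by positivity))
      linarith
    _ = ((W : ℝ) ^ n) ^ 2 := by ring

theorem exists_ne_zero_forall_exists_forall_notMem_sq (F : Type*) [Field F] [NumberField F]
    (κ : Type*) [Finite κ] :
    ∃ N : 𝓞 F, N ≠ 0 ∧ ∀ (D : 𝓞 F) (e : κ → 𝓞 F), N ∣ D → (∀ i γ, D * γ + e i ≠ 0) →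
      ∃ γ, ∀ q : Ideal (𝓞 F), q.IsMaximal → D ∉ q → ∀ i, D * γ + e i ∉ q ^ 2 := by
  classical
  have := Fintype.ofFinite κ
  let b := RingOfIntegers.basis F
  obtain ⟨T, hT⟩ := exists_finset_forall_card_mul_add_mem_sq_le b
    (ε := 1 / (2 * (Fintype.card κ + 1))) (by positivity)
  refine ⟨∏ I ∈ T.erase ⊥, (Ideal.absNorm I : 𝓞 F), Finset.prod_ne_zero_iff.mpr fun I hI ↦
    Nat.cast_ne_zero.mpr (Ideal.absNorm_eq_zero_iff.not.mpr (Finset.ne_of_mem_erase hI)),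
    fun D e hND hne ↦ ?_⟩
  have hDmem (q : Ideal (𝓞 F)) (hq : q.IsMaximal) (hqT : q ∈ T) : D ∈ q := by
    have hq0 := Ring.ne_bot_of_isMaximal_of_not_isField hq (RingOfIntegers.not_isField F)
    exact Ideal.mem_of_dvd q ((Finset.dvd_prod_of_mem _ (Finset.mem_erase.mpr ⟨hq0, hqT⟩)).trans
      hND) (Ideal.absNorm_mem q)
  choose B hB using fun i ↦ hT D (e i) (hne i)
  obtain ⟨γ, hγ⟩ := exists_forall_not_of_card_filter_coordBox_le b _ B hB
  exact ⟨γ, fun q hq hD i hi ↦ hγ i ⟨q, hq, fun hqT ↦ hD (hDmem q hq hqT), hD, hi⟩⟩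

end SquareSieve

section SquarefreeValues

section Dedekind

variable {R : Type*} [CommRing R] [IsDedekindDomain R]

theorem squarefree_span_singleton_of_forall_notMem_sq {a : R}
    (ha : ∀ q : Ideal R, q.IsMaximal → a ∉ q ^ 2) : Squarefree (Ideal.span {a}) := by
  have ha0 : Ideal.span {a} ≠ 0 := by
    obtain ⟨q, hq⟩ := Ideal.exists_maximal R
    rintro h
    rw [Ideal.zero_eq_bot, Ideal.span_singleton_eq_bot] at h
    exact ha q hq (h ▸ zero_mem _)
  refine (squarefree_iff_no_irreducibles ha0).mpr fun q hq hdvd ↦ ?_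
  have hprime : Prime q := hq.prime
  exact ha q ((Ideal.isPrime_of_prime hprime).isMaximal hprime.ne_zero)
    (sq q ▸ Ideal.dvd_span_singleton.mp hdvd)

theorem prod_notMem_sq {κ : Type*} {s : Finset κ} {q : Ideal R} [q.IsPrime] {f : κ → R}
    (hf : ∀ i ∈ s, f i ∉ q ^ 2) (hsub : ∀ i ∈ s, ∀ j ∈ s, i ≠ j → f i - f j ∉ q) :
    ∏ i ∈ s, f i ∉ q ^ 2 := by
  classical
  by_cases h : ∃ i ∈ s, f i ∈ q
  · obtain ⟨i, hi, hiq⟩ := h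
    rw [← Finset.mul_prod_erase s f hi, mul_comm]
    refine fun hmem ↦ (Ideal.IsPrime.mul_mem_pow q hmem).elim (fun hprod ↦ ?_) (hf i hi)
    obtain ⟨j, hj, hjq⟩ := Ideal.IsPrime.prod_mem_iff.mp hprod
    obtain ⟨hji, hj⟩ := Finset.mem_erase.mp hj
    exact hsub j hj i hi hji (sub_mem hjq hiq)
  · exact fun hmem ↦ h (Ideal.IsPrime.prod_mem_iff.mp (Ideal.pow_le_self two_ne_zero hmem))

theorem exists_forall_sub_mem_pow [Ring.HasFiniteQuotients R] {m : R} (hm : m ≠ 0) (k : ℕ)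
    (c : Ideal R → R) : ∃ x, ∀ q : Ideal R, q.IsMaximal → m ∈ q → x - c q ∈ q ^ k := by
  have hfin : {q : Ideal R | q.IsMaximal ∧ m ∈ q}.Finite :=
    (Ring.HasFiniteQuotients.finite_setOfPred_mem m hm).subset fun _ h ↦ h.2
  have hprime (q : Ideal R) (h : q.IsMaximal ∧ m ∈ q) : Prime q :=
    Ideal.prime_of_isPrime (fun hq ↦ hm (Ideal.mem_bot.mp (hq ▸ h.2))) h.1.isPrime
  obtain ⟨x, hx⟩ := IsDedekindDomain.exists_forall_sub_mem_ideal (s := hfin.toFinset) id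
    (fun _ ↦ k) (fun q hq ↦ hprime q (hfin.mem_toFinset.mp hq)) (fun _ _ _ _ h ↦ h) fun q ↦ c q
  exact ⟨x, fun q hq hmq ↦ hx q (hfin.mem_toFinset.mpr ⟨hq, hmq⟩)⟩

end Dedekind

theorem prod_mul_add_sub_prod_mul_add_mem {R : Type*} [CommRing R] {κ : Type*} [Fintype κ]
    {I : Ideal R} {d x y : R} (e : κ → R) (h : x - y ∈ I) :
    ∏ i, (d * x + e i) - ∏ i, (d * y + e i) ∈ I := by
  rw [← Ideal.Quotient.eq] at h ⊢
  simp only [map_prod, map_add, map_mul, h]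

theorem exists_ne_zero_forall_sub_dvd {R : Type*} [CommRing R] [IsDomain R] {κ : Type*} [Finite κ]
    {e : κ → R} (he : Function.Injective e) : ∃ Δ : R, Δ ≠ 0 ∧ ∀ i j, i ≠ j → e i - e j ∣ Δ := by
  classical
  have := Fintype.ofFinite κ
  refine ⟨∏ ij : κ × κ with ij.1 ≠ ij.2, (e ij.1 - e ij.2), Finset.prod_ne_zero_iff.mpr
    fun ij hij ↦ sub_ne_zero.mpr (he.ne (Finset.mem_filter.mp hij).2), fun i j hij ↦ ?_⟩
  exact Finset.dvd_prod_of_mem (fun ij : κ × κ ↦ e ij.1 - e ij.2) (a := (i, j)) (by simp [hij])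

variable {F : Type*} [Field F] [NumberField F]

theorem exists_squarefree_span_prod_mul_add {κ : Type*} [Fintype κ] {d : 𝓞 F} (hd : d ≠ 0)
    {e : κ → 𝓞 F} (he : Function.Injective e)
    (hlocal : ∀ q : Ideal (𝓞 F), q.IsMaximal → ∃ c, ∏ i, (d * c + e i) ∉ q ^ 2) :
    ∃ β, Squarefree (Ideal.span {∏ i, (d * β + e i)}) := by
  obtain ⟨N, hN0, hN⟩ := exists_ne_zero_forall_exists_forall_notMem_sq F κ
  obtain ⟨π, hπ0, hπ⟩ := Ring.exists_not_isUnit_of_not_isField (RingOfIntegers.not_isField F)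
  obtain ⟨p, hp, hπp⟩ := exists_max_ideal_of_mem_nonunits hπ
  obtain ⟨Δ, hΔ0, hΔ⟩ := exists_ne_zero_forall_sub_dvd he
  -- The factor `π` makes `m` a nonunit, so that `hbad` applies at some prime and gives `hne`.
  let m := d * Δ * N * π
  choose! c hc using hlocal
  obtain ⟨c₀, hc₀⟩ := exists_forall_sub_mem_pow
    (show m ≠ 0 from mul_ne_zero (mul_ne_zero (mul_ne_zero hd hΔ0) hN0) hπ0) 2 c
  have hbad (γ : 𝓞 F) (q : Ideal (𝓞 F)) (hq : q.IsMaximal) (hmq : m ∈ q) :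
      ∏ i, (d * (c₀ + m ^ 2 * γ) + e i) ∉ q ^ 2 := by
    have hcong : c₀ + m ^ 2 * γ - c q ∈ q ^ 2 := by
      rw [add_sub_right_comm]
      exact add_mem (hc₀ q hq hmq) (Ideal.mul_mem_right _ _ (Ideal.pow_mem_pow hmq 2))
    refine fun hmem ↦ hc q hq ?_
    simpa only [sub_sub_cancel] using
      sub_mem hmem (prod_mul_add_sub_prod_mul_add_mem (d := d) e hcong)
  have hshift (γ : 𝓞 F) (i : κ) :
      d * m ^ 2 * γ + (d * c₀ + e i) = d * (c₀ + m ^ 2 * γ) + e i := by ring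
  have hne (i : κ) (γ : 𝓞 F) : d * m ^ 2 * γ + (d * c₀ + e i) ≠ 0 := by
    rw [hshift]
    intro h0
    refine hbad γ p hp (Ideal.mul_mem_left _ _ hπp) ?_
    rw [Finset.prod_eq_zero (Finset.mem_univ i) h0]
    exact zero_mem _
  obtain ⟨γ, hγ⟩ := hN (d * m ^ 2) (fun i ↦ d * c₀ + e i) ⟨d * m * d * Δ * π, by ring⟩ hne
  simp only [hshift] at hγ
  refine ⟨c₀ + m ^ 2 * γ, squarefree_span_singleton_of_forall_notMem_sq fun q hq ↦ ?_⟩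
  by_cases hmq : m ∈ q
  · exact hbad γ q hq hmq
  have hdvd {x : 𝓞 F} (hx : x ∣ m) : x ∉ q := fun h ↦ hmq (Ideal.mem_of_dvd q hx h)
  have hD : d * m ^ 2 ∉ q := fun h ↦ (hq.isPrime.mem_or_mem h).elim
    (hdvd ⟨Δ * N * π, by ring⟩) fun h ↦ hmq (hq.isPrime.mem_of_pow_mem 2 h)
  refine prod_notMem_sq (fun i _ ↦ hγ q hq hD i) fun i _ j _ hij ↦ ?_
  rw [add_sub_add_left_eq_sub]
  exact hdvd ((hΔ i j hij).trans ⟨d * N * π, by ring⟩)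

theorem exists_squarefree_span_sq_sub_four {d x : 𝓞 F} (hd : d ≠ 0) (h2 : 2 ∣ d)
    (hx : IsCoprime (x ^ 2 - 4) d) : ∃ β, Squarefree (Ideal.span {(x + d * β) ^ 2 - 4}) := by
  have hprod (β : 𝓞 F) :
      ∏ i, (d * β + ![x - 2, x + 2] i) = (x + d * β) ^ 2 - 4 := by
    simp only [Fin.prod_univ_two, Matrix.cons_val_zero, Matrix.cons_val_one]
    ring
  have he : Function.Injective ![x - 2, x + 2] := by
    simp only [Function.Injective, Fin.forall_fin_two, Matrix.cons_val_zero, Matrix.cons_val_one]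
    have hne : x - 2 ≠ x + 2 := fun h ↦
      OfNat.ofNat_ne_zero (R := 𝓞 F) 4 (by linear_combination -h)
    simp [hne, hne.symm]
  simp only [← hprod]
  refine exists_squarefree_span_prod_mul_add hd he fun q hq ↦ ?_
  simp only [hprod]
  suffices ∃ c, (x + d * c) ^ 2 - 4 ∉ q from
    this.imp fun c hc hmem ↦ hc (Ideal.pow_le_self two_ne_zero hmem)
  by_cases hdq : d ∈ q
  · refine ⟨0, fun hmem ↦ hq.ne_top (Ideal.eq_top_iff_one q |>.mpr ?_)⟩
    obtain ⟨r, s, hrs⟩ := hx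
    rw [mul_zero, add_zero] at hmem
    exact hrs ▸ add_mem (q.mul_mem_left r hmem) (q.mul_mem_left s hdq)
  · obtain ⟨y, i, hi, hy⟩ := hq.exists_inv hdq
    refine ⟨-(x * y), fun hmem ↦ hdq (Ideal.mem_of_dvd q h2 ?_)⟩
    have hzero : x + d * -(x * y) = x * i := by linear_combination -x * hy
    rw [hzero] at hmem
    have h4 : (2 : 𝓞 F) ^ 2 ∈ q := by
      convert sub_mem (q.mul_mem_left (x ^ 2 * i) hi) hmem using 1
      ring
    exact hq.isPrime.mem_of_pow_mem 2 h4

end SquarefreeValues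

section CoprimeResidues

open Polynomial

theorem exists_eval_notMem_of_natDegree_lt_card {R : Type*} [CommRing R] {κ : Type*} [Fintype κ]
    {s : κ → R} (hs : ∀ i j, i ≠ j → IsUnit (s i - s j)) {P : R[X]} (hP : P.Monic)
    (hdeg : P.natDegree < Fintype.card κ) (q : Ideal R) [q.IsPrime] : ∃ i, P.eval (s i) ∉ q := by
  by_contra! hmem
  have hinj : Function.Injective fun i ↦ Ideal.Quotient.mk q (s i) := fun i j hij ↦ by
    by_contra hne
    exact ‹q.IsPrime›.ne_top (Ideal.eq_top_of_isUnit_mem q (Ideal.Quotient.eq.mp hij) (hs i j hne))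
  refine (hP.map (Ideal.Quotient.mk q)).ne_zero
    (eq_zero_of_natDegree_lt_card_of_eval_eq_zero _ hinj (fun i ↦ ?_)
      ((hP.natDegree_map _).trans_lt hdeg))
  rw [eval_map_apply, Ideal.Quotient.eq_zero_iff_mem]
  exact hmem i

theorem isCoprime_of_forall_isMaximal_notMem {R : Type*} [CommRing R] {a d : R}
    (h : ∀ q : Ideal R, q.IsMaximal → d ∈ q → a ∉ q) : IsCoprime a d := by
  rw [← Ideal.isCoprime_span_singleton_iff, Ideal.isCoprime_iff_sup_eq]
  by_contra hne
  obtain ⟨q, hq, hle⟩ := Ideal.exists_le_maximal _ hne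
  rw [sup_le_iff, Ideal.span_singleton_le_iff_mem, Ideal.span_singleton_le_iff_mem] at hle
  exact h q hq hle.2 hle.1

theorem exists_isCoprime_eval {R : Type*} [CommRing R] [IsDedekindDomain R]
    [Ring.HasFiniteQuotients R] {κ : Type*} [Fintype κ] {s : κ → R}
    (hs : ∀ i j, i ≠ j → IsUnit (s i - s j)) {P : R[X]} (hP : P.Monic)
    (hdeg : P.natDegree < Fintype.card κ) {d : R} (hd : d ≠ 0) :
    ∃ x, IsCoprime (P.eval x) d := by
  have hi (q : Ideal R) (hq : q.IsMaximal) : ∃ i, P.eval (s i) ∉ q :=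
    exists_eval_notMem_of_natDegree_lt_card hs hP hdeg q
  have : Nonempty κ := Fintype.card_pos_iff.mp (Nat.zero_lt_of_lt hdeg)
  choose! i hi using hi
  obtain ⟨x, hx⟩ := exists_forall_sub_mem_pow hd 1 fun q ↦ s (i q)
  refine ⟨x, isCoprime_of_forall_isMaximal_notMem fun q hq hdq hmem ↦ hi q hq ?_⟩
  have hsub : P.eval x - P.eval (s (i q)) ∈ q :=
    Ideal.mem_of_dvd q (sub_dvd_eval_sub x _ P) (by simpa only [pow_one] using hx q hq hdq)
  simpa only [sub_sub_cancel] using sub_mem hmem hsub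

theorem isUnit_geom_sum_sub_geom_sum {R : Type*} [CommRing R] [IsDomain R] {p : ℕ}
    (hp : p.Prime) {ζ : R} (hζ : IsPrimitiveRoot ζ p) {i j : Fin p} (hij : i ≠ j) :
    IsUnit (∑ k ∈ Finset.range i, ζ ^ k - ∑ k ∈ Finset.range j, ζ ^ k) := by
  wlog hlt : j < i generalizing i j
  · rw [← IsUnit.neg_iff, neg_sub]
    exact this hij.symm (lt_of_le_of_ne (not_lt.mp hlt) hij)
  have hlt : (j : ℕ) < i := hlt
  have hcoprime : (i - j : ℕ).Coprime p :=
    (Nat.coprime_of_lt_prime (by lia) (by lia) hp).symm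
  have hfactor : ∑ k ∈ Finset.range i, ζ ^ k - ∑ k ∈ Finset.range j, ζ ^ k =
      ζ ^ (j : ℕ) * ∑ k ∈ Finset.range (i - j), ζ ^ k := by
    have hsplit := Finset.sum_range_add (fun k ↦ ζ ^ k) j (i - j)
    rw [Nat.add_sub_cancel' hlt.le] at hsplit
    simp only [hsplit, pow_add, Finset.mul_sum, add_sub_cancel_left]
  rw [hfactor]
  exact ((hζ.isUnit hp.ne_zero).pow j).mul (hζ.geom_sum_isUnit hp.two_le hcoprime)

theorem exists_isCoprime_sq_sub_four {R : Type*} [CommRing R] [IsDedekindDomain R]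
    [Ring.HasFiniteQuotients R] {ζ : R} (hζ : IsPrimitiveRoot ζ 5) {d : R} (hd : d ≠ 0) (y : R) :
    ∃ x, IsCoprime (x ^ 2 - 4) d ∧ IsCoprime ((x + y) ^ 2 - 4) d := by
  let P : R[X] := (X ^ 2 - C 4) * ((X + C y) ^ 2 - C 4)
  have hP : P.Monic := by
    simp only [P]
    monicity!
  have hdeg : P.natDegree < Fintype.card (Fin 5) := by
    have : P.natDegree ≤ 4 := by simp only [P]; compute_degree!
    simpa using Nat.lt_succ_of_le this
  obtain ⟨x, hx⟩ := exists_isCoprime_eval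
    (fun i j ↦ isUnit_geom_sum_sub_geom_sum Nat.prime_five hζ) hP hdeg hd
  exact ⟨x, IsCoprime.mul_left_iff.mp (by simpa [P] using hx)⟩

end CoprimeResidues

section PrimitiveUnit

universe v

open IntermediateField

theorem exists_smul_mem_adjoin_of_isIntegral {A k F : Type*} [CommRing A]
    [IsIntegrallyClosed A] [Field k] [Field F] [Algebra A k] [IsFractionRing A k] [Algebra k F]
    [Algebra A F] [IsScalarTower A k F] [FiniteDimensional k F] [Algebra.IsSeparable k F] {u : F}
    (hint : IsIntegral A u) (hu : k⟮u⟯ = ⊤) :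
    ∃ d : A, d ≠ 0 ∧ ∀ z, IsIntegral A z → d • z ∈ Algebra.adjoin A {u} := by
  have hadjoin : Algebra.adjoin k {u} = ⊤ := by
    rw [← adjoin_simple_toSubalgebra_of_isAlgebraic (hint.tower_top (A := k)).isAlgebraic, hu,
      top_toSubalgebra]
  let B := PowerBasis.ofAdjoinEqTop hint.tower_top hadjoin
  have hgen : B.gen = u := PowerBasis.ofAdjoinEqTop_gen _ _
  have hdiscr : IsIntegral A (Algebra.discr k B.basis) :=
    Algebra.discr_isIntegral k fun i ↦ by
      rw [B.basis_eq_pow, hgen]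
      exact hint.pow i
  obtain ⟨d, hd⟩ := IsIntegrallyClosed.isIntegral_iff.mp hdiscr
  refine ⟨d, ?_, fun z hz ↦ ?_⟩
  · rintro rfl
    exact Algebra.discr_not_zero_of_basis k B.basis (by rw [← hd, map_zero])
  · rw [← algebraMap_smul k, hd, ← hgen]
    exact Algebra.discr_mul_isIntegral_mem_adjoin k (hgen ▸ hint) hz

theorem exists_adjoin_ringOfIntegers_eq_top (F : Type*) [Field F] [NumberField F] :
    ∃ θ : 𝓞 F, ℚ⟮(θ : F)⟯ = ⊤ := by
  obtain ⟨t, ht⟩ := Field.exists_primitive_element ℚ F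
  obtain ⟨n, hn, hint⟩ := ((IsFractionRing.isAlgebraic_iff ℤ ℚ F).mpr
    (Algebra.IsAlgebraic.isAlgebraic t)).exists_integral_multiple
  obtain ⟨θ, hθ⟩ : ∃ θ : 𝓞 F, (θ : F) = n • t := ⟨⟨n • t, hint⟩, rfl⟩
  refine ⟨θ, ?_⟩
  rw [hθ, eq_top_iff, ← ht, adjoin_simple_le_iff]
  have hmem := smul_mem _ (mem_adjoin_simple_self ℚ (n • t)) (x := (n : ℚ)⁻¹)
  rwa [← Int.cast_smul_eq_zsmul ℚ, inv_smul_smul₀ (Int.cast_ne_zero.mpr hn),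
    Int.cast_smul_eq_zsmul] at hmem

theorem adjoin_simple_eq_top_of_algebraMap_mem {k F L : Type*} [Field k] [Field F] [Field L]
    [Algebra k F] [Algebra F L] [Algebra k L] [IsScalarTower k F L] {θ : F} {u : L}
    (hθ : k⟮θ⟯ = ⊤) (hu : F⟮u⟯ = ⊤) (hmem : algebraMap F L θ ∈ k⟮u⟯) : k⟮u⟯ = ⊤ := by
  have hF : (⊤ : IntermediateField k F) ≤ k⟮u⟯.comap (IsScalarTower.toAlgHom k F L) :=
    hθ ▸ adjoin_simple_le_iff.mpr hmem
  let E : IntermediateField F L := k⟮u⟯.toSubfield.toIntermediateField fun x ↦ hF (mem_top (x := x))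
  have hE : (⊤ : IntermediateField F L) ≤ E :=
    hu ▸ adjoin_simple_le_iff.mpr (mem_adjoin_simple_self k u)
  exact eq_top_iff.mpr fun x _ ↦ hE (mem_top (x := x))

theorem exists_isUnit_adjoin_eq_top (F : Type v) [Field F] [NumberField F] :
    ∃ (L : Type v) (_ : Field L) (_ : NumberField L) (_ : Algebra F L) (u : 𝓞 L),
      IsUnit u ∧ ℚ⟮(u : L)⟯ = ⊤ := by
  obtain ⟨θ, hθ⟩ := exists_adjoin_ringOfIntegers_eq_top F
  obtain ⟨L, _, _, _, u, _, hu, htop⟩ := exists_numberField_adjoin_root_sq_sub_mul_add_one θ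
  refine ⟨L, _, ‹_›, inferInstance, u, isUnit_of_sq_sub_mul_add_one hu,
    adjoin_simple_eq_top_of_algebraMap_mem hθ htop ?_⟩
  have huL : (u : L) ^ 2 - algebraMap F L θ * u + 1 = 0 := by
    simpa [← IsScalarTower.algebraMap_apply] using congrArg (algebraMap (𝓞 L) L) hu
  have hu0 : (u : L) ≠ 0 := fun h ↦ by simp [h] at huL
  have hθu : algebraMap F L θ = u + (u : L)⁻¹ := by
    field_simp
    linear_combination -huL
  exact hθu ▸ add_mem (mem_adjoin_simple_self ℚ _) (inv_mem (mem_adjoin_simple_self ℚ _))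

theorem exists_int_mul_mem_unitSubring (F : Type v) [Field F] [NumberField F] :
    ∃ (L : Type v) (_ : Field L) (_ : NumberField L) (_ : Algebra F L) (d : ℤ),
      d ≠ 0 ∧ ∀ x : 𝓞 L, (d : 𝓞 L) * x ∈ unitSubring (𝓞 L) := by
  obtain ⟨L, _, _, _, u, hu, htop⟩ := exists_isUnit_adjoin_eq_top F
  obtain ⟨d, hd, hmem⟩ :=
    exists_smul_mem_adjoin_of_isIntegral (RingOfIntegers.isIntegral_coe u) htop
  refine ⟨L, _, ‹_›, inferInstance, d, hd, fun x ↦ ?_⟩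
  obtain ⟨p, hp⟩ :=
    Algebra.adjoin_mem_exists_aeval ℤ _ (hmem x (RingOfIntegers.isIntegral_coe x))
  have hdx : (d : 𝓞 L) * x = Polynomial.aeval u p := by
    apply RingOfIntegers.coe_injective
    rw [← Polynomial.aeval_algebraMap_apply, hp, map_mul, map_intCast, zsmul_eq_mul]
  have hle : Algebra.adjoin ℤ {u} ≤ subalgebraOfSubring (unitSubring (𝓞 L)) :=
    Algebra.adjoin_singleton_le (mem_unitSubring_of_isUnit hu)
  exact hdx ▸ hle (Polynomial.aeval_mem_adjoin_singleton ℤ u)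

end PrimitiveUnit

section Iteration

universe v

theorem exists_isSpannedByUnits_map_mem_unitSubring {F : Type v} [Field F] [NumberField F]
    {d : 𝓞 F} (hd : d ≠ 0) (h2 : 2 ∣ d) (hdF : ∀ y, d * y ∈ unitSubring (𝓞 F)) {x : 𝓞 F}
    (hx : IsCoprime (x ^ 2 - 4) d) :
    ∃ (L : Type v) (_ : Field L) (_ : NumberField L) (_ : Algebra F L),
      IsSpannedByUnits (𝓞 F) (𝓞 L) ∧ algebraMap (𝓞 F) (𝓞 L) x ∈ unitSubring (𝓞 L) := by
  obtain ⟨β, hβ⟩ := exists_squarefree_span_sq_sub_four hd h2 hx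
  obtain ⟨L, _, _, _, hFL, hα⟩ := exists_isSpannedByUnits_of_squarefree hβ
  refine ⟨L, _, ‹_›, _, hFL, ?_⟩
  simpa only [← map_sub, add_sub_cancel_right] using
    sub_mem hα (map_mem_unitSubring (algebraMap (𝓞 F) (𝓞 L)) (hdF β))

theorem exists_isSpannedByUnits_forall_map_mem_unitSubring {F : Type v} [Field F] [NumberField F]
    {d : 𝓞 F} (hd : d ≠ 0) (h2 : 2 ∣ d) (hdF : ∀ y, d * y ∈ unitSubring (𝓞 F)) {S : Set (𝓞 F)}
    (hS : S.Finite) (hSd : ∀ x ∈ S, IsCoprime (x ^ 2 - 4) d) :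
    ∃ (L : Type v) (_ : Field L) (_ : NumberField L) (_ : Algebra F L),
      IsSpannedByUnits (𝓞 F) (𝓞 L) ∧
        ∀ x ∈ S, algebraMap (𝓞 F) (𝓞 L) x ∈ unitSubring (𝓞 L) := by
  induction S, hS using Set.Finite.induction_on with
  | empty => exact ⟨F, _, ‹_›, Algebra.id F, .refl _, fun _ hx ↦ hx.elim⟩
  | @insert x S _ _ ih =>
    rw [Set.forall_mem_insert] at hSd
    obtain ⟨L, _, _, _, hFL, hSL⟩ := ih hSd.2
    let φ := algebraMap (𝓞 F) (𝓞 L)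
    have hdL : ∀ y, φ d * y ∈ unitSubring (𝓞 L) :=
      hFL.mul_mem_unitSubring fun y ↦ map_mem_unitSubring φ (hdF y)
    have hφ : Function.Injective φ := FaithfulSMul.algebraMap_injective _ _
    obtain ⟨M, _, _, _, hLM, hxM⟩ := exists_isSpannedByUnits_map_mem_unitSubring
      ((map_ne_zero_iff φ hφ).mpr hd) (map_ofNat φ 2 ▸ map_dvd φ h2) hdL (x := φ x)
      (by simpa only [map_sub, map_pow, map_ofNat φ 4] using hSd.1.map φ)
    let _ : Algebra F M := ((algebraMap L M).comp (algebraMap F L)).toAlgebra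
    have : IsScalarTower F L M := .of_algebraMap_eq fun _ ↦ rfl
    refine ⟨M, _, ‹_›, inferInstance, hFL.trans hLM, ?_⟩
    simp only [IsScalarTower.algebraMap_apply (𝓞 F) (𝓞 L) (𝓞 M)]
    exact Set.forall_mem_insert.mpr ⟨hxM, fun y hy ↦ map_mem_unitSubring _ (hSL y hy)⟩

theorem exists_unitSubring_eq_top_of_isPrimitiveRoot {F : Type v} [Field F] [NumberField F]
    {ζ : 𝓞 F} (hζ : IsPrimitiveRoot ζ 5) {d : 𝓞 F} (hd : d ≠ 0)
    (hdF : ∀ y, d * y ∈ unitSubring (𝓞 F)) :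
    ∃ (L : Type v) (_ : Field L) (_ : NumberField L) (_ : Algebra F L),
      unitSubring (𝓞 L) = ⊤ := by
  have h2d : 2 * d ≠ 0 := mul_ne_zero two_ne_zero hd
  choose c hc hcadd using exists_isCoprime_sq_sub_four hζ h2d
  let B := RingOfIntegers.basis F
  obtain ⟨L, _, _, _, hFL, hL⟩ := exists_isSpannedByUnits_forall_map_mem_unitSubring h2d
    (dvd_mul_right 2 d) (fun y ↦ mul_assoc 2 d y ▸ mul_mem (ofNat_mem _ 2) (hdF y))
    ((Set.finite_range fun i ↦ c (B i)).union (Set.finite_range fun i ↦ c (B i) + B i))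
    (by rintro _ (⟨i, rfl⟩ | ⟨i, rfl⟩); exacts [hc _, hcadd _])
  refine ⟨L, _, ‹_›, inferInstance, ?_⟩
  have hB (i) : algebraMap (𝓞 F) (𝓞 L) (B i) ∈ unitSubring (𝓞 L) := by
    simpa only [← map_sub, add_sub_cancel_left] using
      sub_mem (hL _ (.inr ⟨i, rfl⟩)) (hL _ (.inl ⟨i, rfl⟩))
  have hF (y : 𝓞 F) : algebraMap (𝓞 F) (𝓞 L) y ∈ unitSubring (𝓞 L) := by
    rw [← B.sum_repr y, map_sum]
    exact sum_mem fun i _ ↦ map_zsmul (algebraMap (𝓞 F) (𝓞 L)) _ _ ▸ zsmul_mem (hB i) _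
  refine eq_top_iff.mpr fun y _ ↦ ?_
  simpa only [map_one, one_mul] using
    hFL.mul_mem_unitSubring (a := 1) (fun x ↦ (one_mul x).symm ▸ hF x) y

end Iteration

/-- For every number field `K` there is a finite extension `L` of `K` such that the ring of
integers of `L` is generated (as a ring) by its units. -/
theorem exists_extension_ringOfIntegers_generated_by_units
    (K : Type) [Field K] [NumberField K] :
    ∃ (L : Type) (_ : Field L) (_ : NumberField L) (_ : Algebra K L),
      Subring.closure {x : 𝓞 L | IsUnit x} = ⊤ := by
  have : NumberField (CyclotomicField 5 K) :=
    IsCyclotomicExtension.numberField {5} K (CyclotomicField 5 K)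
  have hζ := (IsCyclotomicExtension.zeta_spec 5 K (CyclotomicField 5 K)).toInteger_isPrimitiveRoot
  obtain ⟨F, _, _, _, d, hd, hdF⟩ := exists_int_mul_mem_unitSubring (CyclotomicField 5 K)
  have hζF := hζ.map_of_injective
    (FaithfulSMul.algebraMap_injective (𝓞 (CyclotomicField 5 K)) (𝓞 F))
  obtain ⟨L, _, _, _, hL⟩ :=
    exists_unitSubring_eq_top_of_isPrimitiveRoot hζF (Int.cast_ne_zero.mpr hd) hdF
  exact ⟨L, _, ‹_›, ((algebraMap F L).comp ((algebraMap _ F).comp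
    (algebraMap K (CyclotomicField 5 K)))).toAlgebra, hL⟩
end
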